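/- arXiv:2104.08708 — 2 statements merged into one kernel-verified Lean document; each statement's English description precedes it below -/
import Mathlib

section
/- There exists a numerical constant ℓ₀ > 0 (independent of n and T) such that for all n ≥ 10 and T ≥ 2, the function f̄(x,z;ȳ) = -Ψ(1)Φ(x₁) + Σ_{i=2}^{T}[Ψ(-z_i)Φ(-x_i) - Ψ(z_i)Φ(x_i)] + Σ_{i=1}^{T-1} h(x_i, z_{i+1}; ȳ^{(i)}) + Σ_{i=1}^{T-1}[c₁·x_i² + c₂·z_{i+1}²], defined on ℝ^T × ℝ^{T-1} × ℝ^{n(T-1)}, is ℓ₀-smooth: its gradient is ℓ₀-Lipschitz with respect to the Euclidean norm. -/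
open Matrix

/-- `Ψ(x) = 0` for `x ≤ 1/2`, `exp(1 - 1/(2x-1)²)` for `x > 1/2`. -/
noncomputable def Psi (x : ℝ) : ℝ :=
  if x ≤ 1 / 2 then 0 else Real.exp (1 - 1 / (2 * x - 1) ^ 2)

/-- `Φ(x) = √e · ∫_{-∞}^x e^{-t²/2} dt`. -/
noncomputable def Phi (x : ℝ) : ℝ :=
  Real.sqrt (Real.exp 1) * ∫ t in Set.Iic x, Real.exp (-t ^ 2 / 2)

/-- The `n × n` tridiagonal matrix with `A 1 1 = A n n = 1`, diagonal `2` otherwise,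
off-diagonal entries `-1`, and all other entries `0` (0-indexed in Lean). -/
noncomputable def triA (n : ℕ) : Matrix (Fin n) (Fin n) ℝ :=
  Matrix.of fun i j =>
    if i = j then (if (i : ℕ) = 0 ∨ (i : ℕ) = n - 1 then 1 else 2)
    else if (i : ℕ) + 1 = (j : ℕ) ∨ (j : ℕ) + 1 = (i : ℕ) then -1 else 0

/-- `B = (α I + A)⁻¹`. -/
noncomputable def Bmat (n : ℕ) (α : ℝ) : Matrix (Fin n) (Fin n) ℝ :=
  (α • (1 : Matrix (Fin n) (Fin n) ℝ) + triA n)⁻¹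

/-- `h(x, z; y) = -(1/2)·Σ_{i=1}^{n-1} (yᵢ - yᵢ₊₁)² - (1/(2n²))·‖y‖₂²
    + √(C/n)·(x y₁ - (1/2) z yₙ)`. -/
noncomputable def hfun (n : ℕ) (hn : 0 < n) (C x z : ℝ) (y : Fin n → ℝ) : ℝ :=
  -(1 / 2) * (∑ i : Fin n, if h : (i : ℕ) + 1 < n then (y i - y ⟨(i : ℕ) + 1, h⟩) ^ 2 else 0)
    - (1 / (2 * (n : ℝ) ^ 2)) * ∑ i : Fin n, (y i) ^ 2
    + Real.sqrt (C / n) * (x * y ⟨0, hn⟩ - (1 / 2) * z * y ⟨n - 1, by omega⟩)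

/-- The unscaled deterministic hard instance `f̄^{nc-sc}` on the Euclidean space
`ℝ^T × ℝ^{T-1} × ℝ^{n(T-1)}` (so that gradients and norms are Euclidean over all
variables). `Sum.inl j` is `x_{j+1}`, `Sum.inr (Sum.inl j)` is `z_{j+2}`, and
`Sum.inr (Sum.inr (j, k))` is coordinate `k+1` of `ȳ^{(j+1)}`. -/
noncomputable def fbarE (n T : ℕ) (hn : 0 < n) (hT : 2 ≤ T) (C c1 c2 : ℝ)
    (w : EuclideanSpace ℝ (Fin T ⊕ (Fin (T - 1) ⊕ Fin (T - 1) × Fin n))) : ℝ :=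
  -Psi 1 * Phi (w (Sum.inl ⟨0, by omega⟩))
    + ∑ j : Fin (T - 1),
        (Psi (-w (Sum.inr (Sum.inl j)))
            * Phi (-w (Sum.inl ⟨(j : ℕ) + 1, by have := j.isLt; omega⟩))
          - Psi (w (Sum.inr (Sum.inl j)))
            * Phi (w (Sum.inl ⟨(j : ℕ) + 1, by have := j.isLt; omega⟩)))
    + ∑ j : Fin (T - 1),
        hfun n hn C (w (Sum.inl ⟨(j : ℕ), by have := j.isLt; omega⟩))
          (w (Sum.inr (Sum.inl j))) (fun k => w (Sum.inr (Sum.inr (j, k))))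
    + ∑ j : Fin (T - 1),
        (c1 * (w (Sum.inl ⟨(j : ℕ), by have := j.isLt; omega⟩)) ^ 2
          + c2 * (w (Sum.inr (Sum.inl j))) ^ 2)


def Sm {E : Type*} [NormedAddCommGroup E] [NormedSpace ℝ E] (f : E → ℝ) (q : E → ℝ) : Prop :=
  (∀ e, 0 ≤ q e) ∧ ∃ F : E → E →L[ℝ] ℝ, (∀ u, HasFDerivAt f (F u) u) ∧
    ∀ u v d, |F u d - F v d| ≤ √(q (u - v)) * √(q d)

section SmLemmas
variable {E : Type*} [NormedAddCommGroup E] [NormedSpace ℝ E]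

lemma cs_two (a b c d : ℝ) (ha : 0 ≤ a) (hb : 0 ≤ b) (hc : 0 ≤ c) (hd : 0 ≤ d) :
    √a * √c + √b * √d ≤ √(a + b) * √(c + d) := by
  rw [← Real.sqrt_mul (add_nonneg ha hb)]
  apply Real.le_sqrt_of_sq_le
  have h1 := Real.sq_sqrt ha
  have h2 := Real.sq_sqrt hb
  have h3 := Real.sq_sqrt hc
  have h4 := Real.sq_sqrt hd
  have e : (a + b) * (c + d) = (√a ^ 2 + √b ^ 2) * (√c ^ 2 + √d ^ 2) := by rw [h1, h2, h3, h4]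
  rw [e]
  nlinarith [sq_nonneg (√a * √d - √b * √c)]

lemma cs_abs (a b c d : ℝ) : |a| * |d| + |b| * |c| ≤ √(a ^ 2 + b ^ 2) * √(c ^ 2 + d ^ 2) := by
  have := cs_two (a ^ 2) (b ^ 2) (d ^ 2) (c ^ 2) (by positivity) (by positivity) (by positivity)
    (by positivity)
  simpa [Real.sqrt_sq_eq_abs, add_comm (d ^ 2)] using this

lemma Sm.zero : Sm (fun _ : E => (0 : ℝ)) (fun _ => 0) :=
  ⟨fun _ => le_rfl, fun _ => 0, fun u => hasFDerivAt_const _ _, by simp⟩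

lemma Sm.add {f g q r : E → ℝ} (hf : Sm f q) (hg : Sm g r) :
    Sm (fun x => f x + g x) (fun x => q x + r x) := by
  obtain ⟨h0, F, hF, hF'⟩ := hf
  obtain ⟨k0, G, hG, hG'⟩ := hg
  refine ⟨fun e => add_nonneg (h0 e) (k0 e), fun u => F u + G u,
    fun u => (hF u).add (hG u), fun u v d => ?_⟩
  refine le_trans ?_ (cs_two _ _ _ _ (h0 _) (k0 _) (h0 _) (k0 _))
  refine le_trans ?_ (add_le_add (hF' u v d) (hG' u v d))
  refine le_trans (le_of_eq ?_) (abs_add_le _ _)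
  simp only [_root_.add_apply]
  congr 1; ring

lemma Sm.const_mul {f q : E → ℝ} (c : ℝ) (hf : Sm f q) :
    Sm (fun x => c * f x) (fun x => |c| * q x) := by
  obtain ⟨h0, F, hF, hF'⟩ := hf
  refine ⟨fun e => mul_nonneg (abs_nonneg _) (h0 e), fun u => c • F u,
    fun u => (hF u).const_mul c, fun u v d => ?_⟩
  simp only [_root_.smul_apply, smul_eq_mul]
  rw [← mul_sub, abs_mul, Real.sqrt_mul (abs_nonneg _), Real.sqrt_mul (abs_nonneg _)]
  have : √|c| * √|c| = |c| := Real.mul_self_sqrt (abs_nonneg _)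
  calc |c| * |F u d - F v d| ≤ |c| * (√(q (u - v)) * √(q d)) := by
        gcongr; exact hF' u v d
    _ = _ := by linear_combination (- √(q (u - v)) * √(q d)) * this

lemma Sm.neg {f q : E → ℝ} (hf : Sm f q) : Sm (fun x => - f x) q := by
  simpa using hf.const_mul (-1)

lemma Sm.sub {f g q r : E → ℝ} (hf : Sm f q) (hg : Sm g r) :
    Sm (fun x => f x - g x) (fun x => q x + r x) := by
  simpa [sub_eq_add_neg] using hf.add hg.neg

lemma Sm.sum {ι : Type*} (s : Finset ι) {f q : ι → E → ℝ} (h : ∀ i, Sm (f i) (q i)) :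
    Sm (fun x => ∑ i ∈ s, f i x) (fun x => ∑ i ∈ s, q i x) := by
  classical
  induction s using Finset.induction_on with
  | empty => simpa using Sm.zero
  | insert a s ha ih =>
    simp only [Finset.sum_insert ha]
    exact (h a).add ih

lemma Sm.sq (L : E →L[ℝ] ℝ) : Sm (fun x => L x ^ 2) (fun x => 2 * L x ^ 2) := by
  refine ⟨fun e => by positivity, fun u => (2 * L u) • L, fun u => ?_, fun u v d => ?_⟩
  · simpa using (L.hasFDerivAt (x := u)).pow 2
  · rw [← Real.sqrt_mul (by positivity)]
    apply Real.le_sqrt_of_sq_le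
    rw [sq_abs]
    simp only [_root_.smul_apply, smul_eq_mul, map_sub]
    apply le_of_eq; ring

lemma Sm.mul (L M : E →L[ℝ] ℝ) : Sm (fun x => L x * M x) (fun x => L x ^ 2 + M x ^ 2) := by
  refine ⟨fun e => by positivity, fun u => L u • M + M u • L, fun u => ?_, fun u v d => ?_⟩
  · exact (L.hasFDerivAt (x := u)).mul (M.hasFDerivAt (x := u))
  · refine le_trans ?_ (cs_abs _ _ _ _)
    rw [← abs_mul, ← abs_mul]
    refine le_trans (le_of_eq ?_) (abs_add_le _ _)
    simp only [_root_.smul_apply, smul_eq_mul, map_sub,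
      _root_.add_apply]
    congr 1; ring

/-- bounded and Lipschitz -/
def BL (K : ℝ) (f : ℝ → ℝ) : Prop := (∀ x, |f x| ≤ K) ∧ ∀ x y, |f x - f y| ≤ K * |x - y|

lemma Sm.comp {K : ℝ} {f f' : ℝ → ℝ} (hf : ∀ x, HasDerivAt f (f' x) x) (hK : 0 ≤ K)
    (h : BL K f') (L : E →L[ℝ] ℝ) : Sm (fun x => f (L x)) (fun x => K * L x ^ 2) := by
  refine ⟨fun e => by positivity, fun u => f' (L u) • L, fun u => ?_, fun u v d => ?_⟩
  · exact (hf (L u)).comp_hasFDerivAt u L.hasFDerivAt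
  · simp only [_root_.smul_apply, smul_eq_mul]
    rw [← sub_mul, abs_mul, Real.sqrt_mul hK, Real.sqrt_mul hK, Real.sqrt_sq_eq_abs,
      Real.sqrt_sq_eq_abs, map_sub]
    have := Real.mul_self_sqrt hK
    calc _ ≤ (K * |L u - L v|) * |L d| := by gcongr; exact h.2 _ _
      _ = _ := by linear_combination (- |L u - L v| * |L d|) * this

lemma Sm.comp2 {K : ℝ} {f f' g g' : ℝ → ℝ} (hf : ∀ x, HasDerivAt f (f' x) x)
    (hg : ∀ x, HasDerivAt g (g' x) x) (hK : 0 ≤ K)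
    (h1 : BL K f) (h2 : BL K f') (h3 : BL K g) (h4 : BL K g') (L M : E →L[ℝ] ℝ) :
    Sm (fun x => f (L x) * g (M x)) (fun x => 2 * K ^ 2 * (L x ^ 2 + M x ^ 2)) := by
  refine ⟨fun e => by positivity, fun u => f (L u) • (g' (M u) • M) + g (M u) • (f' (L u) • L),
    fun u => ?_, fun u v d => ?_⟩
  · exact ((hf (L u)).comp_hasFDerivAt u L.hasFDerivAt).mul
      ((hg (M u)).comp_hasFDerivAt u M.hasFDerivAt)
  · simp only [_root_.smul_apply, smul_eq_mul, _root_.add_apply]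
    have key : ∀ {a b : ℝ → ℝ}, BL K a → BL K b → ∀ x y x' y',
        |a x * b y - a x' * b y'| ≤ K ^ 2 * (|x - x'| + |y - y'|) := by
      intro a b ha hb x y x' y'
      calc |a x * b y - a x' * b y'| = |(a x - a x') * b y + a x' * (b y - b y')| := by
            congr 1; ring
        _ ≤ |a x - a x'| * |b y| + |a x'| * |b y - b y'| := by
            rw [← abs_mul, ← abs_mul]; exact abs_add_le _ _
        _ ≤ (K * |x - x'|) * K + K * (K * |y - y'|) := by
            gcongr
            · exact ha.2 _ _
            · exact hb.1 _
            · exact ha.1 _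
            · exact hb.2 _ _
        _ = _ := by ring
    have k1 := key h1 h4 (L u) (M u) (L v) (M v)
    have k2 := key h2 h3 (L u) (M u) (L v) (M v)
    have e1 : f (L u) * (g' (M u) * M d) + g (M u) * (f' (L u) * L d)
        - (f (L v) * (g' (M v) * M d) + g (M v) * (f' (L v) * L d))
        = (f (L u) * g' (M u) - f (L v) * g' (M v)) * M d
          + (f' (L u) * g (M u) - f' (L v) * g (M v)) * L d := by ring
    rw [e1]
    have aux : ∀ a b : ℝ, |a| + |b| ≤ √(2 * (a ^ 2 + b ^ 2)) := by
      intro a b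
      apply Real.le_sqrt_of_sq_le
      nlinarith [sq_abs a, sq_abs b, sq_nonneg (|a| - |b|)]
    have e2 : ∀ x : E, √(2 * K ^ 2 * (L x ^ 2 + M x ^ 2)) = K * √(2 * (L x ^ 2 + M x ^ 2)) := by
      intro x
      rw [show 2 * K ^ 2 * (L x ^ 2 + M x ^ 2) = K ^ 2 * (2 * (L x ^ 2 + M x ^ 2)) by ring,
        Real.sqrt_mul (by positivity), Real.sqrt_sq hK]
    rw [e2, e2, map_sub, map_sub]
    calc _ ≤ |f (L u) * g' (M u) - f (L v) * g' (M v)| * |M d|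
          + |f' (L u) * g (M u) - f' (L v) * g (M v)| * |L d| := by
            rw [← abs_mul, ← abs_mul]; exact abs_add_le _ _
      _ ≤ (K ^ 2 * (|L u - L v| + |M u - M v|)) * |M d|
          + (K ^ 2 * (|L u - L v| + |M u - M v|)) * |L d| := by gcongr
      _ = K ^ 2 * ((|L u - L v| + |M u - M v|) * (|L d| + |M d|)) := by ring
      _ ≤ K ^ 2 * (√(2 * ((L u - L v) ^ 2 + (M u - M v) ^ 2)) * √(2 * (L d ^ 2 + M d ^ 2))) := by
            gcongr
            · exact aux _ _
            · exact aux _ _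
      _ = _ := by ring

end SmLemmas

lemma Sm.grad {E : Type*} [NormedAddCommGroup E] [InnerProductSpace ℝ E] [CompleteSpace E]
    {f q : E → ℝ} (h : Sm f q) (l : ℝ) (hl : 0 ≤ l) (hq : ∀ e, q e ≤ l * ‖e‖ ^ 2) (u v : E) :
    ‖gradient f u - gradient f v‖ ≤ l * ‖u - v‖ := by
  obtain ⟨h0, F, hF, hF'⟩ := h
  unfold gradient
  rw [← map_sub, LinearIsometryEquiv.norm_map, (hF u).fderiv, (hF v).fderiv]
  refine ContinuousLinearMap.opNorm_le_bound _ (by positivity) fun d => ?_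
  rw [Real.norm_eq_abs, _root_.sub_apply]
  have hs : ∀ e, √(q e) ≤ √l * ‖e‖ := by
    intro e
    rw [← Real.sqrt_sq (norm_nonneg e), ← Real.sqrt_mul hl]
    exact Real.sqrt_le_sqrt (hq e)
  calc _ ≤ _ := hF' u v d
    _ ≤ (√l * ‖u - v‖) * (√l * ‖d‖) := by gcongr <;> exact hs _
    _ = _ := by
      have := Real.mul_self_sqrt hl
      linear_combination (‖u - v‖ * ‖d‖) * this

lemma lip_of_deriv {f f' : ℝ → ℝ} {K : ℝ} (hf : ∀ x, HasDerivAt f (f' x) x)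
    (hK : ∀ x, |f' x| ≤ K) (x y : ℝ) : |f x - f y| ≤ K * |x - y| := by
  have := Convex.norm_image_sub_le_of_norm_hasDerivWithin_le (f := f) (f' := f') (C := K)
    (s := Set.univ) (fun x _ => (hf x).hasDerivWithinAt) (fun x _ => by simpa using hK x)
    convex_univ (Set.mem_univ y) (Set.mem_univ x)
  simpa using this

lemma BL_of {f f' : ℝ → ℝ} {K K' : ℝ} (hf : ∀ x, HasDerivAt f (f' x) x)
    (hK : ∀ x, |f' x| ≤ K) (h : ∀ x, |f x| ≤ K') (M : ℝ) (h1 : K ≤ M) (h2 : K' ≤ M) : BL M f :=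
  ⟨fun x => (h x).trans h2, fun x y => (lip_of_deriv hf hK x y).trans
    (by gcongr)⟩

/-- phi' -/
noncomputable def phi1 (x : ℝ) : ℝ := √(Real.exp 1) * Real.exp (-x ^ 2 / 2)
noncomputable def phi2 (x : ℝ) : ℝ := √(Real.exp 1) * (Real.exp (-x ^ 2 / 2) * (-x))

lemma gauss_int : MeasureTheory.Integrable (fun t : ℝ => Real.exp (-t ^ 2 / 2)) := by
  have := integrable_exp_neg_mul_sq (b := 1 / 2) (by norm_num)
  convert this using 2 with t
  congr 1; ring

lemma Phi_deriv (x : ℝ) : HasDerivAt Phi (phi1 x) x := by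
  have hc : Continuous (fun t : ℝ => Real.exp (-t ^ 2 / 2)) := by fun_prop
  have h := intervalIntegral.integral_hasDerivAt_right (hc.intervalIntegrable 0 x)
    (hc.stronglyMeasurableAtFilter _ _) hc.continuousAt
  have e : Phi = fun x => √(Real.exp 1) * ((∫ t in Set.Iic 0, Real.exp (-t ^ 2 / 2)) +
      ∫ t in (0 : ℝ)..x, Real.exp (-t ^ 2 / 2)) := by
    funext x
    unfold Phi
    rw [← intervalIntegral.integral_Iic_sub_Iic gauss_int.integrableOn gauss_int.integrableOn]
    ring
  rw [e]
  exact (h.const_add _).const_mul _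

lemma phi1_deriv (x : ℝ) : HasDerivAt phi1 (phi2 x) x := by
  unfold phi1 phi2
  apply HasDerivAt.const_mul
  have : HasDerivAt (fun x : ℝ => -x ^ 2 / 2) (-x) x := by
    have := ((hasDerivAt_pow 2 x).neg).div_const 2
    refine this.congr_deriv ?_
    norm_num
    ring
  exact this.exp

lemma phi1_bd (x : ℝ) : |phi1 x| ≤ √(Real.exp 1) := by
  unfold phi1
  rw [abs_of_nonneg (by positivity)]
  have : Real.exp (-x ^ 2 / 2) ≤ 1 := Real.exp_le_one_iff.2 (by nlinarith [sq_nonneg x])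
  nlinarith [Real.sqrt_nonneg (Real.exp 1)]

lemma phi2_bd (x : ℝ) : |phi2 x| ≤ √(Real.exp 1) := by
  unfold phi2
  rw [abs_mul, abs_mul, abs_of_nonneg (Real.sqrt_nonneg _), Real.abs_exp, abs_neg]
  have h1 : |x| ≤ Real.exp (x ^ 2 / 2) := by
    have := Real.add_one_le_exp (x ^ 2 / 2)
    nlinarith [sq_abs x, sq_nonneg (|x| - 1)]
  have : Real.exp (-x ^ 2 / 2) * |x| ≤ 1 := by
    calc _ ≤ Real.exp (-x ^ 2 / 2) * Real.exp (x ^ 2 / 2) := by gcongr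
      _ = 1 := by rw [← Real.exp_add]; ring_nf; simp
  nlinarith [Real.sqrt_nonneg (Real.exp 1)]

lemma Phi_bd (x : ℝ) : |Phi x| ≤ √(Real.exp 1) * ∫ t, Real.exp (-t ^ 2 / 2) := by
  unfold Phi
  rw [abs_of_nonneg]
  · gcongr
    · exact Filter.Eventually.of_forall fun t => by positivity
    · exact gauss_int
    · exact MeasureTheory.Measure.restrict_le_self
  · apply mul_nonneg (Real.sqrt_nonneg _)
    exact MeasureTheory.integral_nonneg fun t => by positivity

/-- s ↦ exp(-1/s^2) s^{-k} for s > 0, else 0 -/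
noncomputable def gk (k : ℕ) (s : ℝ) : ℝ := if s ≤ 0 then 0 else Real.exp (-1 / s ^ 2) / s ^ k

lemma gk_nonneg (k : ℕ) (s : ℝ) : 0 ≤ gk k s := by
  unfold gk; split_ifs with h
  · exact le_rfl
  · push Not at h; positivity

lemma gk_bd (k m : ℕ) (hm : k ≤ 2 * m) (s : ℝ) :
    gk k s ≤ m.factorial * |s| ^ (2 * m - k) := by
  unfold gk; split_ifs with h
  · positivity
  · push Not at h
    rw [abs_of_pos h, div_le_iff₀ (by positivity), mul_assoc, ← pow_add, Nat.sub_add_cancel hm,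
      neg_div, Real.exp_neg]
    have := Real.pow_div_factorial_le_exp (1 / s ^ 2) (by positivity) m
    rw [inv_le_comm₀ (by positivity) (by positivity)]
    refine le_trans (le_of_eq ?_) this
    rw [div_pow, one_pow, ← pow_mul]
    field_simp

lemma gk_deriv (k : ℕ) (s : ℝ) :
    HasDerivAt (gk k) (2 * gk (k + 3) s - k * gk (k + 1) s) s := by
  rcases lt_trichotomy s 0 with h | h | h
  · have e : gk k =ᶠ[nhds s] fun _ => 0 := by
      filter_upwards [Iio_mem_nhds h] with t ht
      simp [gk, le_of_lt (Set.mem_Iio.1 ht)]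
    have : 2 * gk (k + 3) s - k * gk (k + 1) s = 0 := by simp [gk, h.le]
    rw [this]
    exact (hasDerivAt_const s (0 : ℝ)).congr_of_eventuallyEq e
  · subst h
    have : 2 * gk (k + 3) 0 - k * gk (k + 1) 0 = 0 := by simp [gk]
    rw [this, hasDerivAt_iff_isLittleO_nhds_zero]
    have hb : (fun h => gk k (0 + h) - gk k 0 - h • (0 : ℝ)) =O[nhds 0]
        (fun h : ℝ => h ^ (k + 2)) := by
      apply Asymptotics.IsBigO.of_bound ((k + 1).factorial : ℝ)
      refine Filter.Eventually.of_forall fun h => ?_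
      have := gk_bd k (k + 1) (by omega) h
      rw [show 2 * (k + 1) - k = k + 2 by omega] at this
      have h0 : gk k 0 = 0 := by simp [gk]
      simp only [zero_add, h0, sub_zero, smul_zero, norm_pow, Real.norm_eq_abs,
        abs_of_nonneg (gk_nonneg k h)]
      exact this
    refine hb.trans_isLittleO ?_
    simpa using Asymptotics.isLittleO_pow_pow (𝕜 := ℝ) (m := 1) (n := k + 2) (by omega)
  · have e : gk k =ᶠ[nhds s] fun t => Real.exp (-1 / t ^ 2) / t ^ k := by
      filter_upwards [Ioi_mem_nhds h] with t ht
      simp [gk, not_le.2 (Set.mem_Ioi.1 ht)]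
    have hs : s ≠ 0 := h.ne'
    have h1 : HasDerivAt (fun t : ℝ => -1 / t ^ 2) (2 / s ^ 3) s := by
      have := ((hasDerivAt_pow 2 s).inv (by positivity)).const_mul (-1)
      have e2 : (fun t : ℝ => -1 / t ^ 2) = fun y => -1 * (fun x : ℝ => x ^ 2)⁻¹ y := by
        funext t; simp [div_eq_mul_inv]
      rw [e2]
      refine this.congr_deriv ?_
      norm_num
      field_simp
    have h2 := h1.exp.div (hasDerivAt_pow k s) (by positivity)
    refine (h2.congr_of_eventuallyEq e).congr_deriv ?_
    simp only [gk, not_le.2 h, if_false]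
    rcases k with _ | k
    · simp; field_simp
    · simp only [Nat.add_sub_cancel]
      field_simp
      ring

lemma gk_bd' (k m m' : ℕ) (h : k = 2 * m + 1) (h' : m' = m + 1) (s : ℝ) :
    gk k s ≤ m.factorial + m'.factorial := by
  have e : gk k s ≤ gk (2 * m) s + gk (2 * m') s := by
    subst h h'
    unfold gk; split_ifs with h
    · simp
    · push Not at h
      rw [← sub_nonneg]
      have : Real.exp (-1 / s ^ 2) / s ^ (2 * m) + Real.exp (-1 / s ^ 2) / s ^ (2 * (m + 1))
        - Real.exp (-1 / s ^ 2) / s ^ (2 * m + 1)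
        = Real.exp (-1 / s ^ 2) / s ^ (2 * m + 2) * (s ^ 2 - s + 1) := by
        field_simp; ring
      rw [this]
      have : 0 ≤ s ^ 2 - s + 1 := by nlinarith [sq_nonneg (s - 1)]
      positivity
  have h1 := gk_bd (2 * m) m le_rfl s
  have h2 := gk_bd (2 * m') m' le_rfl s
  simp at h1 h2
  linarith

noncomputable def psi1 (x : ℝ) : ℝ := Real.exp 1 * (2 * gk 3 (2 * x - 1)) * 2
noncomputable def psi2 (x : ℝ) : ℝ :=
  Real.exp 1 * (2 * ((2 * gk 6 (2 * x - 1) - 3 * gk 4 (2 * x - 1)) * 2)) * 2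

lemma Psi_eq (x : ℝ) : Psi x = Real.exp 1 * gk 0 (2 * x - 1) := by
  unfold Psi gk
  by_cases h : x ≤ 1 / 2
  · rw [if_pos h, if_pos (by linarith), mul_zero]
  · rw [if_neg h, if_neg (by linarith), pow_zero, div_one, ← Real.exp_add]
    congr 1; ring

lemma lin_deriv (x : ℝ) : HasDerivAt (fun x : ℝ => 2 * x - 1) 2 x := by
  simpa using ((hasDerivAt_id x).const_mul 2).sub_const 1

lemma Psi_deriv (x : ℝ) : HasDerivAt Psi (psi1 x) x := by
  rw [show Psi = _ from funext Psi_eq]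
  have := ((gk_deriv 0 (2 * x - 1)).comp x (lin_deriv x)).const_mul (Real.exp 1)
  refine this.congr_deriv ?_
  simp [psi1]; ring

lemma psi1_deriv (x : ℝ) : HasDerivAt psi1 (psi2 x) x := by
  have := ((((gk_deriv 3 (2 * x - 1)).comp x (lin_deriv x)).const_mul 2).const_mul
    (Real.exp 1)).mul_const 2
  refine this.congr_deriv ?_
  simp [psi2]

lemma Psi_bd (x : ℝ) : |Psi x| ≤ Real.exp 1 := by
  rw [Psi_eq, abs_mul, Real.abs_exp, abs_of_nonneg (gk_nonneg _ _)]
  have := gk_bd 0 0 (by norm_num) (2 * x - 1)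
  simp at this
  nlinarith [Real.exp_pos 1]

lemma psi1_bd (x : ℝ) : |psi1 x| ≤ Real.exp 1 * 12 := by
  unfold psi1
  have := gk_bd' 3 1 2 rfl rfl (2 * x - 1)
  have h0 := gk_nonneg 3 (2 * x - 1)
  rw [abs_of_nonneg (by positivity)]
  norm_num [Nat.factorial] at this
  nlinarith [Real.exp_pos 1]

lemma psi2_bd (x : ℝ) : |psi2 x| ≤ Real.exp 1 * 144 := by
  unfold psi2
  have h1 := gk_bd 6 3 (by norm_num) (2 * x - 1)
  have h2 := gk_bd 4 2 (by norm_num) (2 * x - 1)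
  have h3 := gk_nonneg 6 (2 * x - 1)
  have h4 := gk_nonneg 4 (2 * x - 1)
  norm_num [Nat.factorial] at h1 h2
  rw [abs_le]
  constructor <;> nlinarith [Real.exp_pos 1]

lemma exists_K : ∃ K, 0 ≤ K ∧ BL K Psi ∧ BL K psi1 ∧ BL K Phi ∧ BL K phi1 := by
  have hI : 0 ≤ √(Real.exp 1) * ∫ t, Real.exp (-t ^ 2 / 2) :=
    mul_nonneg (Real.sqrt_nonneg _) (MeasureTheory.integral_nonneg fun t => by positivity)
  have hs : 0 ≤ √(Real.exp 1) := Real.sqrt_nonneg _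
  have he := Real.exp_pos 1
  refine ⟨Real.exp 1 * 144 + √(Real.exp 1) + √(Real.exp 1) * ∫ t, Real.exp (-t ^ 2 / 2),
    by positivity, BL_of Psi_deriv psi1_bd Psi_bd _ ?_ ?_,
    BL_of psi1_deriv psi2_bd psi1_bd _ ?_ ?_, BL_of Phi_deriv phi1_bd Phi_bd _ ?_ ?_,
    BL_of phi1_deriv phi2_bd phi1_bd _ ?_ ?_⟩ <;> linarith

noncomputable def pseq (α : ℝ) : ℕ → ℝ
  | 0 => 1
  | 1 => 1 + α
  | (k + 2) => (2 + α) * pseq α (k + 1) - pseq α k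

lemma pseq_mono (α : ℝ) (hα : 0 ≤ α) (k : ℕ) :
    1 ≤ pseq α k ∧ 0 ≤ pseq α (k + 1) - pseq α k ∧
      pseq α (k + 1) - pseq α k ≤ α * (k + 1) * pseq α k := by
  induction k with
  | zero => simp [pseq, hα]
  | succ k ih =>
    obtain ⟨h1, h2, h3⟩ := ih
    have h4 : 1 ≤ pseq α (k + 1) := by linarith
    have e : pseq α (k + 1 + 1) = (2 + α) * pseq α (k + 1) - pseq α k := rfl
    have h5 : 0 ≤ α * pseq α (k + 1) := by positivity
    have h6 : α * (k + 1) * pseq α k ≤ α * (k + 1) * pseq α (k + 1) := by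
      gcongr; linarith
    refine ⟨h4, ?_, ?_⟩
    · rw [e]; linarith
    · rw [e]; push_cast; linarith

lemma pseq_le (n : ℕ) (hn : 0 < n) (k : ℕ) (hk : k ≤ n) :
    pseq (((n : ℝ) ^ 2)⁻¹) k ≤ (1 + 1 / (n : ℝ)) ^ k := by
  induction k with
  | zero => simp [pseq]
  | succ k ih =>
    have hα : (0 : ℝ) ≤ ((n : ℝ) ^ 2)⁻¹ := by positivity
    obtain ⟨h1, h2, h3⟩ := pseq_mono _ hα k
    have hn' : (0 : ℝ) < n := by exact_mod_cast hn
    have hk' : (k : ℝ) + 1 ≤ n := by exact_mod_cast hk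
    have h4 : ((n : ℝ) ^ 2)⁻¹ * (k + 1) ≤ 1 / n := by
      calc _ ≤ ((n : ℝ) ^ 2)⁻¹ * n := by gcongr
        _ = _ := by field_simp
    have h5 := ih (by omega)
    calc _ ≤ pseq ((n ^ 2 : ℝ)⁻¹) k + ((n ^ 2 : ℝ)⁻¹) * (k + 1) * pseq ((n ^ 2 : ℝ)⁻¹) k := by
          linarith
      _ ≤ pseq ((n ^ 2 : ℝ)⁻¹) k + 1 / n * pseq ((n ^ 2 : ℝ)⁻¹) k := by gcongr
      _ = (1 + 1 / (n : ℝ)) * pseq ((n ^ 2 : ℝ)⁻¹) k := by ring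
      _ ≤ (1 + 1 / (n : ℝ)) * (1 + 1 / (n : ℝ)) ^ k := by gcongr
      _ = _ := by ring

lemma pseq_le3 (n : ℕ) (hn : 0 < n) (k : ℕ) (hk : k ≤ n) :
    pseq (((n : ℝ) ^ 2)⁻¹) k ≤ 3 := by
  have hn' : (0 : ℝ) < n := by exact_mod_cast hn
  calc _ ≤ (1 + 1 / (n : ℝ)) ^ k := pseq_le n hn k hk
    _ ≤ (1 + 1 / (n : ℝ)) ^ n := by
      gcongr
      · have : 0 < 1 / (n : ℝ) := by positivity
        linarith
    _ ≤ (Real.exp (1 / n)) ^ n := by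
      gcongr
      rw [add_comm]; exact Real.add_one_le_exp _
    _ = Real.exp 1 := by
      rw [← Real.exp_nat_mul]; congr 1; field_simp
    _ ≤ 3 := by linarith [Real.exp_one_lt_d9]

lemma tri_mulVec (n : ℕ) (hn : 10 ≤ n) (hp : 0 < n) (α : ℝ) :
    (α • (1 : Matrix (Fin n) (Fin n) ℝ) + triA n) *ᵥ (fun i => pseq α (n - 1 - i))
      = Pi.single ⟨0, hp⟩ ((1 + α) * pseq α (n - 1) - pseq α (n - 2)) := by
  funext i
  have e1 : ((α • (1 : Matrix (Fin n) (Fin n) ℝ) + triA n) *ᵥ (fun i => pseq α (n - 1 - i))) i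
    = ∑ j : Fin n, (fun j : ℕ =>
      (if (i : ℕ) = j then (α + (if (i : ℕ) = 0 ∨ (i : ℕ) = n - 1 then 1 else 2))
          * pseq α (n - 1 - j) else 0)
      - (if (i : ℕ) + 1 = j then pseq α (n - 1 - j) else 0)
      - (if (j : ℕ) + 1 = i then pseq α (n - 1 - j) else 0)) (j : ℕ) := by
    simp only [Matrix.mulVec, dotProduct]
    refine Finset.sum_congr rfl fun j _ => ?_
    simp only [Matrix.add_apply, Matrix.smul_apply, Matrix.one_apply, triA, Matrix.of_apply,
      smul_eq_mul, Fin.ext_iff]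
    by_cases h1 : (i : ℕ) = j
    · have h2 : ¬ ((i : ℕ) + 1 = j) := by omega
      have h3 : ¬ ((j : ℕ) + 1 = i) := by omega
      simp only [if_pos h1, if_neg h2, if_neg h3]; ring
    · by_cases h2 : (i : ℕ) + 1 = j
      · have h3 : ¬ ((j : ℕ) + 1 = i) := by omega
        rw [if_neg h1, if_neg h1, if_neg h1, if_pos h2, if_neg h3, if_pos (Or.inl h2)]; ring
      · by_cases h3 : (j : ℕ) + 1 = i
        · rw [if_neg h1, if_neg h1, if_neg h1, if_neg h2, if_pos h3, if_pos (Or.inr h3)]; ring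
        · rw [if_neg h1, if_neg h1, if_neg h1, if_neg h2, if_neg h3, if_neg (by tauto)]; ring
  rw [e1, Fin.sum_univ_eq_sum_range (fun j : ℕ =>
      (if (i : ℕ) = j then (α + (if (i : ℕ) = 0 ∨ (i : ℕ) = n - 1 then 1 else 2))
          * pseq α (n - 1 - j) else 0)
      - (if (i : ℕ) + 1 = j then pseq α (n - 1 - j) else 0)
      - (if (j : ℕ) + 1 = i then pseq α (n - 1 - j) else 0)) n]
  simp only [Finset.sum_sub_distrib, Finset.sum_ite_eq, Finset.mem_range, i.isLt, if_true]
  obtain ⟨i, hi⟩ := i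
  simp only
  rcases i with _ | i
  · have : 0 + 1 < n := by omega
    simp [show 1 < n by omega, show n - 1 - 1 = n - 2 by omega]
    left; ring
  · have e2 : ∀ j : ℕ, (j + 1 = i + 1) ↔ (i = j) := by intro j; omega
    simp only [e2, Finset.sum_ite_eq, Finset.mem_range, show i < n by omega, if_true]
    rw [Pi.single_eq_of_ne (by simp)]
    by_cases h : i + 1 + 1 < n
    · obtain ⟨m, rfl⟩ : ∃ m, n = i + m + 3 := ⟨n - i - 3, by omega⟩
      have t1 : i + m + 3 - 1 - (i + 1) = m + 1 := by omega
      have t2 : i + m + 3 - 1 - (i + 1 + 1) = m := by omega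
      have t3 : i + m + 3 - 1 - i = m + 2 := by omega
      rw [if_pos h, if_neg (by omega), t1, t2, t3]
      simp only [pseq]; ring
    · obtain rfl : n = i + 2 := by omega
      have t1 : i + 2 - 1 - (i + 1) = 0 := by omega
      have t3 : i + 2 - 1 - i = 1 := by omega
      rw [if_neg h, if_pos (by omega), t1, t3]
      simp only [pseq]; ring

lemma consts (n : ℕ) (hn : 10 ≤ n) (hp : 0 < n) (hl : n - 1 < n) (a1 a2 C c1 c2 : ℝ)
    (h1 : a1 = Bmat n (((n : ℝ) ^ 2)⁻¹) ⟨0, hp⟩ ⟨0, hp⟩ / n)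
    (h2 : a2 = Bmat n (((n : ℝ) ^ 2)⁻¹) ⟨n - 1, hl⟩ ⟨0, hp⟩ / n)
    (h3 : C = 12 / a2) (h4 : c1 = C * (a2 - a1) / 2) (h5 : c2 = C * (a2 - a1) / 8) :
    √(C / n) ≤ 2 ∧ |c1| ≤ 12 ∧ |c2| ≤ 3 := by
  have hn' : (10 : ℝ) ≤ n := by exact_mod_cast hn
  set α : ℝ := ((n : ℝ) ^ 2)⁻¹ with hα
  have hα0 : 0 < α := by positivity
  by_cases hM : IsUnit (α • (1 : Matrix (Fin n) (Fin n) ℝ) + triA n).det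
  · set N := (1 + α) * pseq α (n - 1) - pseq α (n - 2) with hN
    have hv := congrArg (fun v => Bmat n α *ᵥ v) (tri_mulVec n hn hp α)
    simp only [Matrix.mulVec_mulVec] at hv
    rw [Bmat, Matrix.nonsing_inv_mul _ hM, Matrix.one_mulVec, Matrix.mulVec_single] at hv
    have b1 := congrFun hv ⟨0, hp⟩
    have b2 := congrFun hv ⟨n - 1, hl⟩
    rw [← Bmat] at b1 b2
    simp [← hN] at b1 b2
    have p0 : pseq α 0 = 1 := rfl
    rw [p0] at b2
    obtain ⟨q1, q2, q3⟩ := pseq_mono α hα0.le (n - 2)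
    rw [show n - 2 + 1 = n - 1 by omega] at q2 q3
    have hP : pseq α (n - 1) ≤ 3 := pseq_le3 n (by omega) (n - 1) (by omega)
    have hc : ((n - 2 : ℕ) : ℝ) = n - 2 := by push_cast [show 2 ≤ n by omega]; ring
    rw [hc] at q3
    set P := pseq α (n - 1)
    have hN0 : 0 < N := by
      have : 0 < α * P := by apply mul_pos hα0; linarith
      rw [hN]; linarith
    have hNle : N ≤ 3 / n := by
      have : α * (n - 2 + 1) * pseq α (n - 2) ≤ α * (n - 2 + 1) * P := by
        have : 0 ≤ α * ((n : ℝ) - 2 + 1) := mul_nonneg hα0.le (by linarith)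
        exact mul_le_mul_of_nonneg_left (by linarith) this
      calc N ≤ α * n * P := by rw [hN]; linarith
        _ ≤ α * n * 3 := by gcongr
        _ = 3 / n := by rw [hα]; field_simp
    have hb2 : a2 = 1 / (N * n) := by
      rw [h2]; field_simp; linarith
    have hb1 : a1 = P / (N * n) := by
      rw [h1]; field_simp; linarith
    have hC : C = 12 * N * n := by rw [h3, hb2]; field_simp
    have hCC : C * (a2 - a1) = 12 * (1 - P) := by rw [hC, hb1, hb2]; field_simp
    refine ⟨?_, ?_, ?_⟩
    · apply Real.sqrt_le_iff.2 ⟨by norm_num, ?_⟩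
      have : C / n = 12 * N := by rw [hC]; field_simp
      rw [this]
      have : 3 / (n : ℝ) ≤ 3 / 10 := by gcongr
      linarith
    · rw [h4, hCC, abs_le]; constructor <;> linarith
    · rw [h5, hCC, abs_le]; constructor <;> linarith
  · have hB : Bmat n α = 0 := by
      rw [Bmat, Matrix.nonsing_inv_apply_not_isUnit _ hM]
    have : C = 0 := by rw [h3, h2, hB]; simp
    rw [h4, h5, this]; simp

lemma sum_inj_le {ι κ : Type*} [Fintype ι] [Fintype κ] (g : κ → ℝ) (hg : ∀ k, 0 ≤ g k)
    (f : ι → κ) (hf : Function.Injective f) : ∑ i, g (f i) ≤ ∑ k, g k := by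
  classical
  calc ∑ i, g (f i) = ∑ k ∈ Finset.univ.map ⟨f, hf⟩, g k := by simp
    _ ≤ ∑ k, g k := Finset.sum_le_sum_of_subset_of_nonneg (Finset.subset_univ _)
        (fun k _ _ => hg k)

lemma h_smooth {E : Type*} [NormedAddCommGroup E] [NormedSpace ℝ E] (n : ℕ) (hn : 0 < n) (C : ℝ)
    (X Z : E →L[ℝ] ℝ) (Y : Fin n → E →L[ℝ] ℝ) :
    Sm (fun w => hfun n hn C (X w) (Z w) (fun k => Y k w))
      (fun e => 1 / 2 * (∑ i : Fin n, if h : (i : ℕ) + 1 < n then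
          2 * (Y i e - Y ⟨(i : ℕ) + 1, h⟩ e) ^ 2 else 0)
        + 1 / (2 * (n : ℝ) ^ 2) * ∑ i : Fin n, 2 * (Y i e) ^ 2
        + √(C / n) * ((X e ^ 2 + Y ⟨0, hn⟩ e ^ 2)
          + 1 / 2 * (Z e ^ 2 + Y ⟨n - 1, by omega⟩ e ^ 2))) := by
  have h1 : Sm (fun w => ∑ i : Fin n, if h : (i : ℕ) + 1 < n then
          (Y i w - Y ⟨(i : ℕ) + 1, h⟩ w) ^ 2 else 0)
      (fun w => ∑ i : Fin n, if h : (i : ℕ) + 1 < n then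
          2 * (Y i w - Y ⟨(i : ℕ) + 1, h⟩ w) ^ 2 else 0) := by
    apply Sm.sum
    intro i
    by_cases h : (i : ℕ) + 1 < n
    · simp only [dif_pos h]
      exact Sm.sq (Y i - Y ⟨(i : ℕ) + 1, h⟩)
    · simp only [dif_neg h]
      exact Sm.zero
  have h2 : Sm (fun w => ∑ i : Fin n, (Y i w) ^ 2) (fun w => ∑ i : Fin n, 2 * (Y i w) ^ 2) :=
    Sm.sum _ fun i => Sm.sq (Y i)
  have h3 := (Sm.mul X (Y ⟨0, hn⟩)).sub ((Sm.mul Z (Y ⟨n - 1, by omega⟩)).const_mul (1 / 2))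
  have := ((h1.const_mul (-(1 / 2))).sub (h2.const_mul (1 / (2 * (n : ℝ) ^ 2)))).add
    (h3.const_mul (√(C / n)))
  have a1 : |(-(1 / 2) : ℝ)| = 1 / 2 := by norm_num
  have a2 : |(1 / 2 : ℝ)| = 1 / 2 := by norm_num
  have a3 : |1 / (2 * (n : ℝ) ^ 2)| = 1 / (2 * (n : ℝ) ^ 2) := abs_of_nonneg (by positivity)
  have a4 : |√(C / n)| = √(C / n) := abs_of_nonneg (Real.sqrt_nonneg _)
  rw [a1, a2, a3, a4] at this
  convert this using 1
  funext w
  simp only [hfun]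
  ring

lemma h_quad (n : ℕ) (hn : 10 ≤ n) (hp : 0 < n) (hl : n - 1 < n) (C x z : ℝ) (hC : √(C / n) ≤ 2) (y : Fin n → ℝ) :
    1 / 2 * (∑ i : Fin n, if h : (i : ℕ) + 1 < n then
          2 * (y i - y ⟨(i : ℕ) + 1, h⟩) ^ 2 else 0)
        + 1 / (2 * (n : ℝ) ^ 2) * ∑ i : Fin n, 2 * (y i) ^ 2
        + √(C / n) * ((x ^ 2 + y ⟨0, hp⟩ ^ 2)
          + 1 / 2 * (z ^ 2 + y ⟨n - 1, hl⟩ ^ 2))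
      ≤ 2 * x ^ 2 + z ^ 2 + 8 * ∑ i : Fin n, (y i) ^ 2 := by
  have hn' : (10 : ℝ) ≤ n := by exact_mod_cast hn
  set S := ∑ i : Fin n, (y i) ^ 2 with hS
  have hS0 : 0 ≤ S := Finset.sum_nonneg fun i _ => sq_nonneg _
  have hi : ∀ i, y i ^ 2 ≤ S := fun i =>
    Finset.single_le_sum (f := fun i => y i ^ 2) (fun i _ => sq_nonneg _) (Finset.mem_univ i)
  have h1 : (∑ i : Fin n, if h : (i : ℕ) + 1 < n then
      2 * (y i - y ⟨(i : ℕ) + 1, h⟩) ^ 2 else 0) ≤ 8 * S := by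
    obtain ⟨m, rfl⟩ : ∃ m, n = m + 1 := ⟨n - 1, by omega⟩
    rw [Fin.sum_univ_castSucc]
    have e1 : ∑ i : Fin m, y i.castSucc ^ 2 ≤ S :=
      sum_inj_le (fun i => y i ^ 2) (fun _ => sq_nonneg _) _ (Fin.castSucc_injective m)
    have e2 : ∑ i : Fin m, y i.succ ^ 2 ≤ S :=
      sum_inj_le (fun i => y i ^ 2) (fun _ => sq_nonneg _) _ (Fin.succ_injective m)
    simp only [Fin.val_castSucc, Fin.val_last, lt_self_iff_false, dite_false, add_zero]
    calc _ ≤ ∑ i : Fin m, (4 * y i.castSucc ^ 2 + 4 * y i.succ ^ 2) := by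
          refine Finset.sum_le_sum fun i _ => ?_
          rw [dif_pos (by omega)]
          have : (⟨(i : ℕ) + 1, by omega⟩ : Fin (m + 1)) = i.succ := rfl
          rw [this]
          nlinarith [sq_nonneg (y i.castSucc + y i.succ)]
      _ = 4 * ∑ i : Fin m, y i.castSucc ^ 2 + 4 * ∑ i : Fin m, y i.succ ^ 2 := by
          rw [Finset.sum_add_distrib, Finset.mul_sum, Finset.mul_sum]
      _ ≤ _ := by linarith
  have h2 : 1 / (2 * (n : ℝ) ^ 2) * ∑ i : Fin n, 2 * (y i) ^ 2 ≤ S := by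
    rw [← Finset.mul_sum, ← hS]
    have : 1 / (2 * (n : ℝ) ^ 2) ≤ 1 / 2 := by
      apply one_div_le_one_div_of_le (by norm_num)
      nlinarith
    nlinarith
  have h3 : √(C / n) * ((x ^ 2 + y ⟨0, hp⟩ ^ 2)
          + 1 / 2 * (z ^ 2 + y ⟨n - 1, hl⟩ ^ 2)) ≤
      2 * ((x ^ 2 + S) + 1 / 2 * (z ^ 2 + S)) := by
    gcongr <;> exact hi _
  linarith

lemma fbar_smooth {K : ℝ} (hK : 0 ≤ K) (k1 : BL K Psi) (k2 : BL K psi1) (k3 : BL K Phi)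
    (k4 : BL K phi1) (n T : ℕ) (hn : 10 ≤ n) (hp : 0 < n) (hl : n - 1 < n) (hT : 2 ≤ T) (C c1 c2 : ℝ)
    (hC : √(C / n) ≤ 2) (h1 : |c1| ≤ 12) (h2 : |c2| ≤ 3)
    (u v : EuclideanSpace ℝ (Fin T ⊕ (Fin (T - 1) ⊕ Fin (T - 1) × Fin n))) :
    ‖gradient (fbarE n T hp hT C c1 c2) u
      - gradient (fbarE n T hp hT C c1 c2) v‖
      ≤ (|Psi 1| * K + 4 * K ^ 2 + 26) * ‖u - v‖ := by
  let p : (Fin T ⊕ (Fin (T - 1) ⊕ Fin (T - 1) × Fin n)) →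
      EuclideanSpace ℝ (Fin T ⊕ (Fin (T - 1) ⊕ Fin (T - 1) × Fin n)) →L[ℝ] ℝ :=
    fun i => EuclideanSpace.proj i
  have s1 := (Sm.comp Phi_deriv hK k4 (p (Sum.inl ⟨0, by omega⟩))).const_mul (-Psi 1)
  have s2 := Sm.sum (Finset.univ : Finset (Fin (T - 1))) (fun j =>
    (Sm.comp2 Psi_deriv Phi_deriv hK k1 k2 k3 k4 (-p (Sum.inr (Sum.inl j)))
      (-p (Sum.inl ⟨(j : ℕ) + 1, by have := j.isLt; omega⟩))).sub
    (Sm.comp2 Psi_deriv Phi_deriv hK k1 k2 k3 k4 (p (Sum.inr (Sum.inl j)))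
      (p (Sum.inl ⟨(j : ℕ) + 1, by have := j.isLt; omega⟩))))
  have s3 := Sm.sum (Finset.univ : Finset (Fin (T - 1))) (fun j =>
    h_smooth n hp C (p (Sum.inl ⟨(j : ℕ), by have := j.isLt; omega⟩))
      (p (Sum.inr (Sum.inl j))) (fun k => p (Sum.inr (Sum.inr (j, k)))))
  have s4 := Sm.sum (Finset.univ : Finset (Fin (T - 1))) (fun j =>
    ((Sm.sq (p (Sum.inl ⟨(j : ℕ), by have := j.isLt; omega⟩))).const_mul c1).add
      ((Sm.sq (p (Sum.inr (Sum.inl j)))).const_mul c2))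
  have s := ((s1.add s2).add s3).add s4
  refine Sm.grad (f := fbarE n T hp hT C c1 c2) s _ (by positivity) (fun e => ?_) u v
  have hpe : ∀ i, p i e = e i := fun i => rfl
  simp only [_root_.neg_apply, hpe, neg_sq, abs_neg]
  rw [EuclideanSpace.real_norm_sq_eq, Fintype.sum_sum_type, Fintype.sum_sum_type,
    Fintype.sum_prod_type]
  set X := ∑ i : Fin T, e (Sum.inl i) ^ 2 with hX
  set Z := ∑ j : Fin (T - 1), e (Sum.inr (Sum.inl j)) ^ 2 with hZ
  set Y := ∑ j : Fin (T - 1), ∑ k : Fin n, e (Sum.inr (Sum.inr (j, k))) ^ 2 with hY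
  have hX0 : 0 ≤ X := Finset.sum_nonneg fun i _ => sq_nonneg _
  have hZ0 : 0 ≤ Z := Finset.sum_nonneg fun i _ => sq_nonneg _
  have hY0 : 0 ≤ Y := Finset.sum_nonneg fun i _ => Finset.sum_nonneg fun i _ => sq_nonneg _
  have hx0 : e (Sum.inl ⟨0, by omega⟩) ^ 2 ≤ X :=
    Finset.single_le_sum (f := fun i : Fin T => e (Sum.inl i) ^ 2) (fun i _ => sq_nonneg _)
      (Finset.mem_univ _)
  have hxa : ∑ j : Fin (T - 1), e (Sum.inl ⟨(j : ℕ), by have := j.isLt; omega⟩) ^ 2 ≤ X :=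
    sum_inj_le (fun i : Fin T => e (Sum.inl i) ^ 2) (fun _ => sq_nonneg _)
      (fun j : Fin (T - 1) => (⟨(j : ℕ), by have := j.isLt; omega⟩ : Fin T))
      (fun a b h => by simpa [Fin.ext_iff] using h)
  have hxb : ∑ j : Fin (T - 1), e (Sum.inl ⟨(j : ℕ) + 1, by have := j.isLt; omega⟩) ^ 2 ≤ X :=
    sum_inj_le (fun i : Fin T => e (Sum.inl i) ^ 2) (fun _ => sq_nonneg _)
      (fun j : Fin (T - 1) => (⟨(j : ℕ) + 1, by have := j.isLt; omega⟩ : Fin T))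
      (fun a b h => by simpa [Fin.ext_iff] using h)
  set Xa := ∑ j : Fin (T - 1), e (Sum.inl ⟨(j : ℕ), by have := j.isLt; omega⟩) ^ 2 with hXa
  set Xb := ∑ j : Fin (T - 1), e (Sum.inl ⟨(j : ℕ) + 1, by have := j.isLt; omega⟩) ^ 2 with hXb
  have b1 : |Psi 1| * (K * e (Sum.inl ⟨0, by omega⟩) ^ 2) ≤ |Psi 1| * K * (X + (Z + Y)) := by
    rw [← mul_assoc]
    gcongr
    linarith
  have b2 : ∑ j : Fin (T - 1), (2 * K ^ 2 * (e (Sum.inr (Sum.inl j)) ^ 2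
        + e (Sum.inl ⟨(j : ℕ) + 1, by have := j.isLt; omega⟩) ^ 2)
      + 2 * K ^ 2 * (e (Sum.inr (Sum.inl j)) ^ 2
        + e (Sum.inl ⟨(j : ℕ) + 1, by have := j.isLt; omega⟩) ^ 2))
      ≤ 4 * K ^ 2 * (X + (Z + Y)) := by
    calc _ = 4 * K ^ 2 * (Z + Xb) := by
          rw [hZ, hXb, ← Finset.sum_add_distrib, Finset.mul_sum]
          exact Finset.sum_congr rfl fun j _ => by ring
      _ ≤ _ := by
          exact mul_le_mul_of_nonneg_left (by linarith) (by positivity)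
  have b3 := Finset.sum_le_sum (s := (Finset.univ : Finset (Fin (T - 1)))) fun j _ =>
    h_quad n hn hp hl C (e (Sum.inl ⟨(j : ℕ), by have := j.isLt; omega⟩)) (e (Sum.inr (Sum.inl j))) hC
      (fun k => e (Sum.inr (Sum.inr (j, k))))
  have e3 : ∑ j : Fin (T - 1), (2 * e (Sum.inl ⟨(j : ℕ), by have := j.isLt; omega⟩) ^ 2
      + e (Sum.inr (Sum.inl j)) ^ 2 + 8 * ∑ k : Fin n, e (Sum.inr (Sum.inr (j, k))) ^ 2)
      = 2 * Xa + Z + 8 * Y := by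
    rw [Finset.sum_add_distrib, Finset.sum_add_distrib, ← Finset.mul_sum, ← Finset.mul_sum]
  rw [e3] at b3
  have b4 : ∑ j : Fin (T - 1), (|c1| * (2 * e (Sum.inl ⟨(j : ℕ), by have := j.isLt; omega⟩) ^ 2)
      + |c2| * (2 * e (Sum.inr (Sum.inl j)) ^ 2)) ≤ 24 * Xa + 6 * Z := by
    rw [hXa, hZ, Finset.mul_sum, Finset.mul_sum, ← Finset.sum_add_distrib]
    refine Finset.sum_le_sum fun j _ => ?_
    nlinarith [sq_nonneg (e (Sum.inl ⟨(j : ℕ), by have := j.isLt; omega⟩)),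
      sq_nonneg (e (Sum.inr (Sum.inl j)))]
  refine (add_le_add (add_le_add (add_le_add b1 b2) b3) b4).trans ?_
  nlinarith


/-- there is a numerical constant `ℓ₀ > 0`, independent of `n` and `T`,
such that `f̄^{nc-sc}` is `ℓ₀`-smooth: its gradient is `ℓ₀`-Lipschitz in Euclidean norm. -/
theorem stmt_10 :
    ∃ ℓ0 : ℝ, 0 < ℓ0 ∧
      ∀ (n T : ℕ) (hn : 10 ≤ n) (hT : 2 ≤ T) (a1 a2 C c1 c2 : ℝ),
        a1 = Bmat n (((n : ℝ) ^ 2)⁻¹) ⟨0, by omega⟩ ⟨0, by omega⟩ / n →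
        a2 = Bmat n (((n : ℝ) ^ 2)⁻¹) ⟨n - 1, by omega⟩ ⟨0, by omega⟩ / n →
        C = 12 / a2 → c1 = C * (a2 - a1) / 2 → c2 = C * (a2 - a1) / 8 →
        ∀ u v : EuclideanSpace ℝ (Fin T ⊕ (Fin (T - 1) ⊕ Fin (T - 1) × Fin n)),
          ‖gradient (fbarE n T (by omega) hT C c1 c2) u
              - gradient (fbarE n T (by omega) hT C c1 c2) v‖ ≤ ℓ0 * ‖u - v‖ := by
  obtain ⟨K, hK, k1, k2, k3, k4⟩ := exists_K
  refine ⟨|Psi 1| * K + 4 * K ^ 2 + 26, by positivity, ?_⟩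
  intro n T hn hT a1 a2 C c1 c2 h1 h2 h3 h4 h5 u v
  obtain ⟨q1, q2, q3⟩ := consts n hn (by omega) (by omega) a1 a2 C c1 c2 h1 h2 h3 h4 h5
  exact fbar_smooth hK k1 k2 k3 k4 n T hn (by omega) (by omega) hT C c1 c2 q1 q2 q3 u v
end

section
/- Fix R₁ ≥ 2 and R₂ ≥ 30·R₁. There exists a constant G > 0 (depending only on R₁ and R₂, not on n or T) such that for all n ≥ 10 and T ≥ 2, the function f̄^{sg}(x,z;ȳ) = -Ψ(1)Φ(x₁) + Σ_{i=2}^{T}[Ψ(-z_i)Φ(-x_i) - Ψ(z_i)Φ(x_i)] + Σ_{i=1}^{T-1} h^{sg}(x_i, z_{i+1}; ȳ^{(i)}) + Σ_{i=1}^{T-1}[c₁·x_i² + c₂·z_{i+1}²] satisfies ‖∇f̄^{sg}(x,z;ȳ)‖_∞ ≤ G at every point with ‖x‖_∞ ≤ R₁, ‖z‖_∞ ≤ R₁, and ‖ȳ^{(i)}‖_∞ ≤ n·R₂ for all i. -/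
open Matrix

/-- `b_{x,z} = x·e₁ - (1/2)·z·eₙ`. -/
noncomputable def bvec (n : ℕ) (x z : ℝ) : Fin n → ℝ := fun i =>
  if (i : ℕ) = 0 then x else if (i : ℕ) = n - 1 then -(1 / 2) * z else 0

/-- `h^{sg}(x, z; y) = (C/n)·[-(1/2)·yᵀ((1/n²)I + A)y + b_{x,z}ᵀ y]`. -/
noncomputable def hsg (n : ℕ) (C x z : ℝ) (y : Fin n → ℝ) : ℝ :=
  (C / n) * (-(1 / 2) * (y ⬝ᵥ ((((n : ℝ) ^ 2)⁻¹ • (1 : Matrix (Fin n) (Fin n) ℝ)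
      + triA n).mulVec y)) + bvec n x z ⬝ᵥ y)

/-- The unscaled stochastic hard instance `f̄^{nc-sc-sg}` on the Euclidean space
`ℝ^T × ℝ^{T-1} × ℝ^{n(T-1)}`. `Sum.inl j` is `x_{j+1}`, `Sum.inr (Sum.inl j)` is
`z_{j+2}`, and `Sum.inr (Sum.inr (j, k))` is coordinate `k+1` of `ȳ^{(j+1)}`. -/
noncomputable def fbarSgE (n T : ℕ) (hn : 0 < n) (hT : 2 ≤ T) (C c1 c2 : ℝ)
    (w : EuclideanSpace ℝ (Fin T ⊕ (Fin (T - 1) ⊕ Fin (T - 1) × Fin n))) : ℝ :=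
  -Psi 1 * Phi (w (Sum.inl ⟨0, by omega⟩))
    + ∑ j : Fin (T - 1),
        (Psi (-w (Sum.inr (Sum.inl j)))
            * Phi (-w (Sum.inl ⟨(j : ℕ) + 1, by have := j.isLt; omega⟩))
          - Psi (w (Sum.inr (Sum.inl j)))
            * Phi (w (Sum.inl ⟨(j : ℕ) + 1, by have := j.isLt; omega⟩)))
    + ∑ j : Fin (T - 1),
        hsg n C (w (Sum.inl ⟨(j : ℕ), by have := j.isLt; omega⟩))
          (w (Sum.inr (Sum.inl j))) (fun k => w (Sum.inr (Sum.inr (j, k))))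
    + ∑ j : Fin (T - 1),
        (c1 * (w (Sum.inl ⟨(j : ℕ), by have := j.isLt; omega⟩)) ^ 2
          + c2 * (w (Sum.inr (Sum.inl j))) ^ 2)

lemma aux_sum_ite (n m : ℕ) (Y : ℕ → ℝ) :
    ∑ j : Fin n, (if (j : ℕ) = m then Y j else 0) = if m < n then Y m else 0 := by
  rw [Fin.sum_univ_eq_sum_range (fun j => if j = m then Y j else 0) n, Finset.sum_ite_eq']
  simp

lemma triA_entry (n : ℕ) (i j : Fin n) : triA n i j =
    (if (j : ℕ) = i then (if (i : ℕ) = 0 ∨ (i : ℕ) = n - 1 then 1 else 2) else 0)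
     - (if (j : ℕ) = i + 1 then 1 else 0) - (if (j : ℕ) + 1 = i then 1 else 0) := by
  simp only [triA, Matrix.of_apply, Fin.ext_iff]
  split_ifs <;> first | omega | norm_num

lemma triA_mulVec (n : ℕ) (hn : 2 ≤ n) (Y : ℕ → ℝ) (i : Fin n) :
    (triA n *ᵥ fun k : Fin n => Y k) i =
      (if 0 < (i : ℕ) then Y i - Y (i - 1) else 0)
        + (if (i : ℕ) + 1 < n then Y i - Y (i + 1) else 0) := by
  have hi := i.isLt
  have key : (triA n *ᵥ fun k : Fin n => Y k) i =
      (if (i : ℕ) = 0 ∨ (i : ℕ) = n - 1 then 1 else 2) * Y i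
      - (if (i : ℕ) + 1 < n then Y (i + 1) else 0)
      - (if 0 < (i : ℕ) then Y (i - 1) else 0) := by
    have e1 := aux_sum_ite n i Y
    have e2 := aux_sum_ite n (i + 1) Y
    have e3 : ∑ j : Fin n, (if (j : ℕ) + 1 = i then Y j else 0)
        = if 0 < (i : ℕ) then Y (i - 1) else 0 := by
      by_cases h : 0 < (i : ℕ)
      · have := aux_sum_ite n (i - 1) Y
        rw [if_pos (by omega)] at this
        rw [if_pos h, ← this]
        refine Finset.sum_congr rfl fun j _ => ?_
        congr 1
        apply propext; omega
      · rw [if_neg h]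
        refine Finset.sum_eq_zero fun j _ => ?_
        rw [if_neg (by omega)]
    rw [if_pos hi] at e1
    rw [← e1, ← e2, ← e3, Finset.mul_sum, ← Finset.sum_sub_distrib, ← Finset.sum_sub_distrib]
    simp only [Matrix.mulVec, dotProduct]
    refine Finset.sum_congr rfl fun j _ => ?_
    rw [triA_entry]
    split_ifs <;> ring
  rw [key]
  split_ifs <;> first | omega | ring

lemma triA_rowsum (n : ℕ) (hn : 2 ≤ n) (i : Fin n) : ∑ j, triA n i j = 0 := by
  have := triA_mulVec n hn (fun _ => 1) i
  simpa [Matrix.mulVec, dotProduct] using this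

lemma triA_diag (n : ℕ) (i : Fin n) : 0 ≤ triA n i i ∧ triA n i i ≤ 2 := by
  simp only [triA, Matrix.of_apply]
  constructor <;> (split_ifs <;> norm_num at *)

lemma triA_off (n : ℕ) (i j : Fin n) (h : i ≠ j) : triA n i j ≤ 0 := by
  simp only [triA, Matrix.of_apply, if_neg h]
  split_ifs <;> norm_num

lemma triA_symm (n : ℕ) (i j : Fin n) : triA n i j = triA n j i := by
  simp only [triA, Matrix.of_apply, Fin.ext_iff]
  split_ifs <;> first | omega | norm_num

lemma triA_off_sum (n : ℕ) (hn : 2 ≤ n) (i : Fin n) :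
    ∑ j ∈ Finset.univ.erase i, |triA n i j| = triA n i i := by
  have h := triA_rowsum n hn i
  rw [← Finset.add_sum_erase _ _ (Finset.mem_univ i)] at h
  have : ∑ j ∈ Finset.univ.erase i, |triA n i j| = - ∑ j ∈ Finset.univ.erase i, triA n i j := by
    rw [← Finset.sum_neg_distrib]
    refine Finset.sum_congr rfl fun j hj => ?_
    exact abs_of_nonpos (triA_off n i j (Finset.ne_of_mem_erase hj).symm)
  linarith

lemma M_det (n : ℕ) (hn : 2 ≤ n) (α : ℝ) (hα : 0 < α) :
    (α • (1 : Matrix (Fin n) (Fin n) ℝ) + triA n).det ≠ 0 := by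
  apply det_ne_zero_of_sum_row_lt_diag
  intro k
  have h1 : ∑ j ∈ Finset.univ.erase k, ‖(α • (1 : Matrix (Fin n) (Fin n) ℝ) + triA n) k j‖
      = ∑ j ∈ Finset.univ.erase k, |triA n k j| := by
    refine Finset.sum_congr rfl fun j hj => ?_
    simp [(Finset.ne_of_mem_erase hj).symm]
  rw [h1, triA_off_sum n hn]
  have := triA_diag n k
  simp
  rw [abs_of_nonneg] <;> linarith

/-- pair `(w, d)` -/
noncomputable def rec2 (α : ℝ) : ℕ → ℝ × ℝ
  | 0 => (1, 0)
  | k + 1 => ((rec2 α k).1 + ((rec2 α k).2 + α * (rec2 α k).1), (rec2 α k).2 + α * (rec2 α k).1)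

lemma rec2_lower (α : ℝ) (hα : 0 < α) (k : ℕ) : 1 ≤ (rec2 α k).1 ∧ α * k ≤ (rec2 α k).2 := by
  induction k with
  | zero => simp [rec2]
  | succ k ih =>
    obtain ⟨h1, h2⟩ := ih
    have : 0 ≤ α * k := by positivity
    simp only [rec2]
    push_cast
    constructor <;> nlinarith

lemma rec2_upper (n : ℕ) (hn : 2 ≤ n) (k : ℕ) (hk : k + 1 ≤ n) :
    (rec2 ((n : ℝ) ^ 2)⁻¹ k).1 ≤ 1 + ((n : ℝ) ^ 2)⁻¹ * (k * (k + 1)) ∧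
    (rec2 ((n : ℝ) ^ 2)⁻¹ k).1 ≤ 2 ∧ (rec2 ((n : ℝ) ^ 2)⁻¹ k).2 ≤ 2 * ((n : ℝ) ^ 2)⁻¹ * k := by
  have hα : 0 < ((n : ℝ) ^ 2)⁻¹ := by positivity
  have hαn : ((n : ℝ) ^ 2)⁻¹ * (n * n) = 1 := by field_simp
  generalize ((n : ℝ) ^ 2)⁻¹ = α at *
  induction k with
  | zero => simp [rec2]
  | succ k ih =>
    obtain ⟨h1, h2, h3⟩ := ih (by omega)
    have hk' : (k : ℝ) + 1 + 1 ≤ n := by exact_mod_cast hk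
    have hA : (rec2 α (k+1)).1 ≤ 1 + α * ((k + 1) * (k + 1 + 1)) := by
      simp only [rec2]; nlinarith
    have hB : α * (((k:ℝ) + 1) * (k + 1 + 1)) ≤ α * (n * n) := by
      gcongr; linarith
    push_cast
    refine ⟨hA, by linarith, ?_⟩
    simp only [rec2]; nlinarith

lemma M_rec2 (n : ℕ) (hn : 2 ≤ n) (α : ℝ) :
    (α • (1 : Matrix (Fin n) (Fin n) ℝ) + triA n) *ᵥ (fun k : Fin n => (rec2 α (n - 1 - k)).1)
     = Pi.single ⟨0, by omega⟩ (rec2 α n).2 := by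
  ext i
  have hi := i.isLt
  rw [Matrix.add_mulVec, Pi.add_apply, triA_mulVec n hn (fun k => (rec2 α (n - 1 - k)).1) i,
    Matrix.smul_mulVec, Matrix.one_mulVec, Pi.smul_apply, smul_eq_mul, Pi.single_apply]
  simp only [Fin.ext_iff]
  by_cases h0 : (i : ℕ) = 0
  · obtain ⟨m, rfl⟩ : ∃ m, n = m + 2 := ⟨n - 2, by omega⟩
    simp [h0, rec2]
    ring
  · obtain ⟨p, hp⟩ : ∃ p, (i : ℕ) = p + 1 := ⟨i - 1, by omega⟩
    by_cases hl : (i : ℕ) + 1 < n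
    · obtain ⟨q, hq⟩ : ∃ q, n = p + 1 + 1 + 1 + q := ⟨n - (p + 3), by omega⟩
      have e1 : n - 1 - (p + 1) = q + 1 := by omega
      have e2 : n - 1 - (p + 1 - 1) = q + 1 + 1 := by omega
      have e3 : n - 1 - (p + 1 + 1) = q := by omega
      rw [hp] at hl
      simp only [hp, e1, e2, e3, hl, if_true]
      simp [rec2]
      ring
    · have e1 : n - 1 - (p + 1) = 0 := by omega
      have e2 : n - 1 - (p + 1 - 1) = 1 := by omega
      rw [hp] at hl
      simp only [hp, e1, e2, hl, if_false]
      simp [rec2]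

lemma B_bounds (n : ℕ) (hn : 2 ≤ n) (a1 a2 C c1 c2 : ℝ)
    (h1 : a1 = Bmat n (((n : ℝ) ^ 2)⁻¹) ⟨0, by omega⟩ ⟨0, by omega⟩ / n)
    (h2 : a2 = Bmat n (((n : ℝ) ^ 2)⁻¹) ⟨n - 1, by omega⟩ ⟨0, by omega⟩ / n)
    (hC : C = 12 / a2) (hc1 : c1 = C * (a2 - a1) / 2) (hc2 : c2 = C * (a2 - a1) / 8) :
    |C| ≤ 24 ∧ |c1| ≤ 6 ∧ |c2| ≤ 6 := by
  have hn2 : 2 ≤ n := by omega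
  have hα : 0 < ((n : ℝ) ^ 2)⁻¹ := by positivity
  have hnpos : (0 : ℝ) < n := by positivity
  have hαn : ((n : ℝ) ^ 2)⁻¹ * n * n = 1 := by field_simp
  have hM := M_rec2 n hn2 ((n : ℝ) ^ 2)⁻¹
  have hd := M_det n hn2 _ hα
  have hlow := rec2_lower _ hα
  obtain ⟨-, hup1, hup2⟩ := rec2_upper n hn2 (n - 1) (by omega)
  have hs : (rec2 ((n : ℝ) ^ 2)⁻¹ n).2 =
      (rec2 ((n : ℝ) ^ 2)⁻¹ (n - 1)).2 + ((n : ℝ) ^ 2)⁻¹ * (rec2 ((n : ℝ) ^ 2)⁻¹ (n - 1)).1 := by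
    obtain ⟨m, rfl⟩ : ∃ m, n = m + 1 := ⟨n - 1, by omega⟩
    rfl
  have hcast : ((n - 1 : ℕ) : ℝ) = n - 1 := by rw [Nat.cast_sub (by omega)]; simp
  rw [hcast] at hup2
  have hl1 := hlow (n - 1)
  have hln := (hlow n).2
  have hB := congrArg (fun v => Bmat n (((n : ℝ) ^ 2)⁻¹) *ᵥ v) hM
  simp only [Bmat] at hB h1 h2
  rw [Matrix.mulVec_mulVec, Matrix.nonsing_inv_mul _ (isUnit_iff_ne_zero.mpr hd),
    Matrix.one_mulVec] at hB
  have hB0 := congrFun hB ⟨0, by omega⟩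
  have hB1 := congrFun hB ⟨n - 1, by omega⟩
  rw [Matrix.mulVec_single] at hB0 hB1
  simp at hB0 hB1
  rw [show (rec2 ((n : ℝ) ^ 2)⁻¹ 0).1 = 1 from rfl] at hB1
  set α := ((n : ℝ) ^ 2)⁻¹
  set s := (rec2 α n).2
  set W := (rec2 α (n - 1)).1
  set b0 := (α • (1 : Matrix (Fin n) (Fin n) ℝ) + triA n)⁻¹ ⟨0, by omega⟩ ⟨0, by omega⟩
  set b1 := (α • (1 : Matrix (Fin n) (Fin n) ℝ) + triA n)⁻¹ ⟨n - 1, by omega⟩ ⟨0, by omega⟩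
  have hsle : s * n ≤ 2 := by
    have : s ≤ 2 * α * n := by nlinarith
    nlinarith
  have hspos : 0 < s := lt_of_lt_of_le (by positivity) hln
  have ha2 : a2 = 1 / (s * n) := by
    rw [h2]; field_simp; linarith
  have ha1 : a1 = W / (s * n) := by
    rw [h1, hB0]; field_simp
  have hsn : 0 < s * n := by positivity
  have hC' : C = 12 * (s * n) := by rw [hC, ha2]; field_simp
  have hCd : C * (a2 - a1) = 12 * (1 - W) := by rw [hC', ha1, ha2]; field_simp
  rw [hc1, hc2, hCd, hC']
  refine ⟨?_, ?_, ?_⟩ <;> rw [abs_le] <;> constructor <;> linarith [hl1.1]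

lemma Psi_eq_s13 (x : ℝ) : Psi x =
    (fun u : ℝ => Real.exp 1 * expNegInvGlue (u ^ 2)) (max (2 * x - 1) 0) := by
  unfold Psi
  by_cases h : x ≤ 1 / 2
  · rw [if_pos h, max_eq_right (by linarith)]
    simp [expNegInvGlue.zero]
  · push Not at h
    rw [if_neg (by linarith), max_eq_left (by linarith)]
    have h0 : 0 < (2 * x - 1) ^ 2 := by have : 0 < 2 * x - 1 := by linarith
                                        positivity
    simp only [expNegInvGlue, if_neg (not_le.mpr h0)]
    rw [← Real.exp_add]
    congr 1
    rw [one_div]; ring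

lemma F_smooth : ContDiff ℝ 1 (fun u : ℝ => Real.exp 1 * expNegInvGlue (u ^ 2)) :=
  contDiff_const.mul ((expNegInvGlue.contDiff (n := 1)).comp (contDiff_id.pow 2))

lemma Psi_bound (R : ℝ) (hR : 0 ≤ R) : ∃ K : ℝ, 0 ≤ K ∧
    (∀ x, |x| ≤ R → |Psi x| ≤ K) ∧
    ∀ x y, |x| ≤ R → |y| ≤ R → |Psi x - Psi y| ≤ K * |x - y| := by
  obtain ⟨L, hL⟩ := (F_smooth.locallyLipschitz.locallyLipschitzOn (s := Set.Icc 0 (2 * R + 1))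
    ).exists_lipschitzOnWith_of_compact isCompact_Icc
  have hlip : ∀ x y, |x| ≤ R → |y| ≤ R → |Psi x - Psi y| ≤ 2 * L * |x - y| := by
    intro x y hx hy
    rw [abs_le] at hx hy
    rw [Psi_eq_s13, Psi_eq_s13]
    have := hL.dist_le_mul (max (2 * x - 1) 0) ⟨le_max_right _ _, max_le (by linarith) (by linarith)⟩
      (max (2 * y - 1) 0) ⟨le_max_right _ _, max_le (by linarith) (by linarith)⟩
    rw [Real.dist_eq, Real.dist_eq] at this
    refine this.trans ?_
    have h2 := abs_max_sub_max_le_abs (2 * x - 1) (2 * y - 1) 0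
    have h3 : |2 * x - 1 - (2 * y - 1)| = 2 * |x - y| := by
      rw [show 2 * x - 1 - (2 * y - 1) = 2 * (x - y) by ring, abs_mul]; norm_num
    rw [h3] at h2
    have := mul_le_mul_of_nonneg_left h2 L.coe_nonneg
    linarith
  have hL0 := L.coe_nonneg
  refine ⟨2 * L * R + 2 * L, by positivity, ?_, ?_⟩
  · intro x hx
    have := hlip x 0 hx (by simpa using hR)
    have h0 : Psi 0 = 0 := by simp [Psi]
    rw [h0, sub_zero, sub_zero] at this
    have := mul_le_mul_of_nonneg_left hx (by positivity : 0 ≤ 2 * (L : ℝ))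
    linarith
  · intro x y hx hy
    have := hlip x y hx hy
    have h : 0 ≤ 2 * L * R * |x - y| := by positivity
    linarith

lemma Phi_lip (x y : ℝ) : |Phi x - Phi y| ≤ Real.sqrt (Real.exp 1) * |x - y| := by
  have hi : MeasureTheory.Integrable (fun t : ℝ => Real.exp (-t ^ 2 / 2)) := by
    have := integrable_exp_neg_mul_sq (b := 1 / 2) (by norm_num)
    refine this.congr (Filter.Eventually.of_forall fun t => ?_)
    simp only; congr 1; ring
  unfold Phi
  rw [← mul_sub, abs_mul, abs_of_nonneg (Real.sqrt_nonneg _)]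
  refine mul_le_mul_of_nonneg_left ?_ (Real.sqrt_nonneg _)
  rw [intervalIntegral.integral_Iic_sub_Iic hi.integrableOn hi.integrableOn]
  have := intervalIntegral.norm_integral_le_of_norm_le_const (a := y) (b := x) (C := 1)
    (f := fun t : ℝ => Real.exp (-t ^ 2 / 2)) (fun t _ => by
      rw [Real.norm_eq_abs, abs_of_pos (Real.exp_pos _), Real.exp_le_one_iff]
      nlinarith [sq_nonneg t])
  simpa using this

lemma PsiPhi_bound (R : ℝ) (hR : 0 ≤ R) : ∃ K : ℝ, 0 ≤ K ∧
    (∀ x, |x| ≤ R → |Psi x| ≤ K) ∧ (∀ x, |x| ≤ R → |Phi x| ≤ K) ∧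
    (∀ x y, |x| ≤ R → |y| ≤ R → |Psi x - Psi y| ≤ K * |x - y|) ∧
    (∀ x y, |x| ≤ R → |y| ≤ R → |Phi x - Phi y| ≤ K * |x - y|) := by
  obtain ⟨K, hK, h1, h2⟩ := Psi_bound R hR
  have hs := Real.sqrt_nonneg (Real.exp 1)
  set s := Real.sqrt (Real.exp 1)
  have h3 : 0 ≤ s * R := by positivity
  have h4 := abs_nonneg (Phi 0)
  refine ⟨K + s + s * R + |Phi 0|, by positivity, fun x hx => ?_, fun x hx => ?_,
    fun x y hx hy => ?_, fun x y hx hy => ?_⟩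
  · linarith [h1 x hx]
  · have h5 := Phi_lip x 0
    rw [sub_zero] at h5
    have h6 := abs_sub_abs_le_abs_sub (Phi x) (Phi 0)
    have h7 := mul_le_mul_of_nonneg_left hx hs
    linarith
  · refine (h2 x y hx hy).trans ?_
    gcongr; linarith
  · refine (Phi_lip x y).trans ?_
    gcongr; linarith

lemma prod_lip {a a' b b' K da db : ℝ} (hK : 0 ≤ K) (hb : |b| ≤ K) (ha' : |a'| ≤ K)
    (h1 : |a' - a| ≤ da) (h2 : |b' - b| ≤ db) : |a' * b' - a * b| ≤ K * (da + db) := by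
  have : a' * b' - a * b = a' * (b' - b) + (a' - a) * b := by ring
  rw [this]
  refine (abs_add_le _ _).trans ?_
  rw [abs_mul, abs_mul]
  have e1 : |a'| * |b' - b| ≤ K * db := by gcongr
  have e2 : |a' - a| * |b| ≤ da * K :=
    mul_le_mul h1 hb (abs_nonneg _) ((abs_nonneg _).trans h1)
  linarith

lemma M_row (n : ℕ) (hn : 2 ≤ n) (v : Fin n → ℝ) (V : ℝ) (hv : ∀ k, |v k| ≤ V) (i : Fin n) :
    |((((n : ℝ) ^ 2)⁻¹ • (1 : Matrix (Fin n) (Fin n) ℝ) + triA n) *ᵥ v) i| ≤ 5 * V := by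
  have hV : 0 ≤ V := (abs_nonneg _).trans (hv i)
  rw [Matrix.add_mulVec, Pi.add_apply, Matrix.smul_mulVec, Matrix.one_mulVec, Pi.smul_apply,
    smul_eq_mul]
  have hα : ((n : ℝ) ^ 2)⁻¹ ≤ 1 := by
    apply inv_le_one_of_one_le₀
    have : (1 : ℝ) ≤ n := by exact_mod_cast (by omega : 1 ≤ n)
    exact one_le_pow₀ this
  have hα0 : 0 ≤ ((n : ℝ) ^ 2)⁻¹ := by positivity
  have h1 : |((n : ℝ) ^ 2)⁻¹ * v i| ≤ V := by
    rw [abs_mul, abs_of_nonneg hα0]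
    calc _ ≤ 1 * V := by gcongr; exact hv i
      _ = V := one_mul V
  have h2 : |(triA n *ᵥ v) i| ≤ 4 * V := by
    simp only [Matrix.mulVec, dotProduct]
    calc _ ≤ ∑ j, |triA n i j * v j| := Finset.abs_sum_le_sum_abs _ _
      _ ≤ ∑ j, |triA n i j| * V := by
          refine Finset.sum_le_sum fun j _ => ?_
          rw [abs_mul]; gcongr; exact hv j
      _ = (∑ j, |triA n i j|) * V := by rw [Finset.sum_mul]
      _ ≤ 4 * V := by
          gcongr
          rw [← Finset.add_sum_erase _ _ (Finset.mem_univ i), triA_off_sum n hn,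
            abs_of_nonneg (triA_diag n i).1]
          linarith [(triA_diag n i).2]
  linarith [abs_add_le (((n : ℝ) ^ 2)⁻¹ * v i) ((triA n *ᵥ v) i)]

lemma M_quad (n : ℕ) (y y' : Fin n → ℝ) (α : ℝ) :
    y' ⬝ᵥ ((α • (1 : Matrix (Fin n) (Fin n) ℝ) + triA n) *ᵥ y')
     - y ⬝ᵥ ((α • (1 : Matrix (Fin n) (Fin n) ℝ) + triA n) *ᵥ y)
     = (y' - y) ⬝ᵥ ((α • (1 : Matrix (Fin n) (Fin n) ℝ) + triA n) *ᵥ (y' + y)) := by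
  have hsym : (α • (1 : Matrix (Fin n) (Fin n) ℝ) + triA n)ᵀ =
      α • (1 : Matrix (Fin n) (Fin n) ℝ) + triA n := by
    rw [Matrix.transpose_add, Matrix.transpose_smul, Matrix.transpose_one]
    congr 1
    ext i j
    exact triA_symm n j i
  have hs : y' ⬝ᵥ ((α • (1 : Matrix (Fin n) (Fin n) ℝ) + triA n) *ᵥ y)
      = y ⬝ᵥ ((α • (1 : Matrix (Fin n) (Fin n) ℝ) + triA n) *ᵥ y') := by
    rw [Matrix.dotProduct_mulVec, ← Matrix.mulVec_transpose, hsym, dotProduct_comm]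
  rw [Matrix.mulVec_add, dotProduct_add, sub_dotProduct, sub_dotProduct, hs]
  ring

lemma hsg_lip (n : ℕ) (hn : 2 ≤ n) (C x z x' z' R S : ℝ) (y y' : Fin n → ℝ)
    (hR : 0 ≤ R) (hS : 0 ≤ S) (hC : |C| ≤ 24) (hx' : |x'| ≤ R) (hz' : |z'| ≤ R)
    (hy : ∀ k, |y k| ≤ n * S) (hy' : ∀ k, |y' k| ≤ n * S) :
    |hsg n C x' z' y' - hsg n C x z y| ≤
      24 * (5 * S + R) * (|x' - x| + |z' - z| + ∑ k, |y' k - y k|) := by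
  have hn1 : (1 : ℝ) ≤ n := by exact_mod_cast (by omega : 1 ≤ n)
  have hn0 : (0 : ℝ) < n := by linarith
  set D := ∑ k, |y' k - y k| with hD
  have hD0 : 0 ≤ D := Finset.sum_nonneg fun _ _ => abs_nonneg _
  have e : hsg n C x' z' y' - hsg n C x z y = (C / n) * (-(1 / 2) *
      ((y' - y) ⬝ᵥ ((((n : ℝ) ^ 2)⁻¹ • (1 : Matrix (Fin n) (Fin n) ℝ) + triA n) *ᵥ (y' + y)))
      + (bvec n x' z' ⬝ᵥ y' - bvec n x z ⬝ᵥ y)) := by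
    rw [← M_quad]; unfold hsg; ring
  have q1 : |(y' - y) ⬝ᵥ ((((n : ℝ) ^ 2)⁻¹ • (1 : Matrix (Fin n) (Fin n) ℝ) + triA n)
      *ᵥ (y' + y))| ≤ 10 * (n * S) * D := by
    rw [dotProduct, hD, Finset.mul_sum]
    refine (Finset.abs_sum_le_sum_abs _ _).trans (Finset.sum_le_sum fun k _ => ?_)
    rw [abs_mul, mul_comm]
    have := M_row n hn (y' + y) (2 * (n * S)) (fun k => by
      refine (abs_add_le _ _).trans ?_
      linarith [hy k, hy' k]) k
    rw [Pi.sub_apply]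
    gcongr
    linarith
  have hb : ∀ k, |bvec n x' z' k| ≤ R := by
    intro k
    unfold bvec
    split_ifs
    · exact hx'
    · rw [abs_mul]; norm_num; linarith [abs_nonneg z']
    · simpa using hR
  have hbd : ∑ k, |bvec n x' z' k - bvec n x z k| ≤ |x' - x| + |z' - z| := by
    have s1 := aux_sum_ite n 0 (fun _ => |x' - x|)
    have s2 := aux_sum_ite n (n - 1) (fun _ => |z' - z|)
    rw [if_pos (by omega)] at s1 s2
    rw [← s1, ← s2, ← Finset.sum_add_distrib]
    refine Finset.sum_le_sum fun k _ => ?_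
    have := abs_nonneg (x' - x)
    have := abs_nonneg (z' - z)
    unfold bvec
    split_ifs
    · linarith
    · linarith
    · rw [← mul_sub, abs_mul]; norm_num; linarith
    · simp
  have q2 : |bvec n x' z' ⬝ᵥ y' - bvec n x z ⬝ᵥ y| ≤
      n * S * (|x' - x| + |z' - z|) + n * R * D := by
    rw [dotProduct, dotProduct, ← Finset.sum_sub_distrib]
    refine (Finset.abs_sum_le_sum_abs _ _).trans ?_
    calc _ ≤ ∑ k, (n * S * |bvec n x' z' k - bvec n x z k| + n * R * |y' k - y k|) := by
          refine Finset.sum_le_sum fun k _ => ?_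
          have : bvec n x' z' k * y' k - bvec n x z k * y k =
            (bvec n x' z' k - bvec n x z k) * y k + bvec n x' z' k * (y' k - y k) := by ring
          rw [this]
          refine (abs_add_le _ _).trans ?_
          rw [abs_mul, abs_mul]
          have u1 : |bvec n x' z' k - bvec n x z k| * |y k| ≤
            |bvec n x' z' k - bvec n x z k| * (n * S) := by gcongr; exact hy k
          have u2 : |bvec n x' z' k| * |y' k - y k| ≤ n * R * |y' k - y k| := by
            gcongr
            nlinarith [hb k]
          linarith
      _ ≤ _ := by
          rw [Finset.sum_add_distrib, ← Finset.mul_sum, ← Finset.mul_sum]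
          gcongr
  rw [e, abs_mul, abs_div, abs_of_pos hn0]
  set E := |x' - x| + |z' - z| with hE
  have hE0 : 0 ≤ E := by positivity
  have q3 : |(-(1 / 2) *
      ((y' - y) ⬝ᵥ ((((n : ℝ) ^ 2)⁻¹ • (1 : Matrix (Fin n) (Fin n) ℝ) + triA n) *ᵥ (y' + y)))
      + (bvec n x' z' ⬝ᵥ y' - bvec n x z ⬝ᵥ y))| ≤ n * ((5 * S + R) * (E + D)) := by
    refine (abs_add_le _ _).trans ?_
    rw [abs_mul, show |(-(1 / 2) : ℝ)| = 1 / 2 by norm_num [abs_of_pos]]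
    have p1 : 0 ≤ n * S * E := by positivity
    have p2 : 0 ≤ n * R * E := by positivity
    linarith
  calc _ ≤ 24 / n * (n * ((5 * S + R) * (E + D))) := by gcongr
    _ = _ := by field_simp

lemma f_lip (R S : ℝ) (hR : 1 ≤ R) (hS : 0 ≤ S) : ∃ G : ℝ, 0 < G ∧
    ∀ (n T : ℕ) (hn : 2 ≤ n) (hT : 2 ≤ T) (C c1 c2 : ℝ), |C| ≤ 24 → |c1| ≤ 6 → |c2| ≤ 6 →
    ∀ w w' : EuclideanSpace ℝ (Fin T ⊕ (Fin (T - 1) ⊕ Fin (T - 1) × Fin n)),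
      (∀ i, |w (Sum.inl i)| ≤ R) → (∀ j, |w (Sum.inr (Sum.inl j))| ≤ R) →
      (∀ j k, |w (Sum.inr (Sum.inr (j, k)))| ≤ (n : ℝ) * S) →
      (∀ i, |w' (Sum.inl i)| ≤ R) → (∀ j, |w' (Sum.inr (Sum.inl j))| ≤ R) →
      (∀ j k, |w' (Sum.inr (Sum.inr (j, k)))| ≤ (n : ℝ) * S) →
      |fbarSgE n T (by omega) hT C c1 c2 w' - fbarSgE n T (by omega) hT C c1 c2 w| ≤
        G * ∑ i, |w' i - w i| := by
  have hR0 : 0 ≤ R := by linarith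
  obtain ⟨K, hK, hPsi, hPhi, lPsi, lPhi⟩ := PsiPhi_bound R hR0
  refine ⟨K * K + 2 * (K * K) + 24 * (5 * S + R) + 12 * R, by positivity, ?_⟩
  intro n T hn hT C c1 c2 hC hc1 hc2 w w' wx wz wy wx' wz' wy'
  set dx : Fin T → ℝ := fun i => |w' (Sum.inl i) - w (Sum.inl i)| with hdx
  set dz : Fin (T - 1) → ℝ := fun j => |w' (Sum.inr (Sum.inl j)) - w (Sum.inr (Sum.inl j))| with hdz
  set dy : Fin (T - 1) → ℝ := fun j => ∑ k,
    |w' (Sum.inr (Sum.inr (j, k))) - w (Sum.inr (Sum.inr (j, k)))| with hdy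
  have dx0 : ∀ i, 0 ≤ dx i := fun _ => abs_nonneg _
  have dz0 : ∀ i, 0 ≤ dz i := fun _ => abs_nonneg _
  have dy0 : ∀ i, 0 ≤ dy i := fun _ => Finset.sum_nonneg fun _ _ => abs_nonneg _
  have hD : ∑ i, |w' i - w i| = ∑ i, dx i + (∑ j, dz j + ∑ j, dy j) := by
    rw [Fintype.sum_sum_type, Fintype.sum_sum_type, Fintype.sum_prod_type]
  have sz : 0 ≤ ∑ j, dz j := Finset.sum_nonneg fun j _ => dz0 j
  have sy : 0 ≤ ∑ j, dy j := Finset.sum_nonneg fun j _ => dy0 j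
  have inj : ∀ φ : Fin (T - 1) → Fin T, Function.Injective φ → ∑ j, dx (φ j) ≤ ∑ i, dx i := by
    intro φ hφ
    rw [← Finset.sum_image (f := dx) (s := Finset.univ) (g := φ) (fun a _ b _ h => hφ h)]
    exact Finset.sum_le_sum_of_subset_of_nonneg (Finset.subset_univ _) fun i _ _ => dx0 i
  have hj1 := inj (fun j => ⟨(j : ℕ) + 1, by have := j.isLt; omega⟩) (fun a b h => by
    simp only [Fin.mk.injEq] at h; ext; omega)
  have hj0 := inj (fun j => ⟨(j : ℕ), by have := j.isLt; omega⟩) (fun a b h => by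
    simp only [Fin.mk.injEq] at h; ext; omega)
  have h00 : dx ⟨0, by omega⟩ ≤ ∑ i, dx i :=
    Finset.single_le_sum (fun i _ => dx0 i) (Finset.mem_univ _)
  rw [hD]
  set X := ∑ i, dx i
  set Z := ∑ j, dz j
  set Y := ∑ j, dy j
  have t1 : |-Psi 1 * Phi (w' (Sum.inl ⟨0, by omega⟩)) - -Psi 1 * Phi (w (Sum.inl ⟨0, by omega⟩))|
      ≤ K * K * (X + (Z + Y)) := by
    rw [← mul_sub, abs_mul, abs_neg, mul_assoc]
    have a1 := hPsi 1 (by simpa using hR)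
    have a2 := lPhi _ _ (wx' ⟨0, by omega⟩) (wx ⟨0, by omega⟩)
    have a3 : K * dx ⟨0, by omega⟩ ≤ K * (X + (Z + Y)) := by gcongr; linarith
    exact mul_le_mul a1 (a2.trans a3) (abs_nonneg _) hK
  have sumle : ∀ (g g' b : Fin (T - 1) → ℝ), (∀ j, |g' j - g j| ≤ b j) →
      |∑ j, g' j - ∑ j, g j| ≤ ∑ j, b j := by
    intro g g' b h
    rw [← Finset.sum_sub_distrib]
    exact (Finset.abs_sum_le_sum_abs _ _).trans (Finset.sum_le_sum fun j _ => h j)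
  have t2 := sumle
    (fun j => Psi (-w (Sum.inr (Sum.inl j)))
            * Phi (-w (Sum.inl ⟨(j : ℕ) + 1, by have := j.isLt; omega⟩))
          - Psi (w (Sum.inr (Sum.inl j)))
            * Phi (w (Sum.inl ⟨(j : ℕ) + 1, by have := j.isLt; omega⟩)))
    (fun j => Psi (-w' (Sum.inr (Sum.inl j)))
            * Phi (-w' (Sum.inl ⟨(j : ℕ) + 1, by have := j.isLt; omega⟩))
          - Psi (w' (Sum.inr (Sum.inl j)))
            * Phi (w' (Sum.inl ⟨(j : ℕ) + 1, by have := j.isLt; omega⟩)))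
    (fun j => 2 * (K * K) * (dz j + dx ⟨(j : ℕ) + 1, by have := j.isLt; omega⟩)) (by
      intro j
      have m1 := prod_lip hK (hPhi _ (wx ⟨(j : ℕ) + 1, by have := j.isLt; omega⟩))
        (hPsi _ (wz' j)) (lPsi _ _ (wz' j) (wz j))
        (lPhi _ _ (wx' ⟨(j : ℕ) + 1, by have := j.isLt; omega⟩)
          (wx ⟨(j : ℕ) + 1, by have := j.isLt; omega⟩))
      have nwx := fun i => (abs_neg (w (Sum.inl i))).trans_le (wx i)
      have nwx' := fun i => (abs_neg (w' (Sum.inl i))).trans_le (wx' i)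
      have nwz := fun i => (abs_neg (w (Sum.inr (Sum.inl i)))).trans_le (wz i)
      have nwz' := fun i => (abs_neg (w' (Sum.inr (Sum.inl i)))).trans_le (wz' i)
      have m2 := prod_lip hK (hPhi _ (nwx ⟨(j : ℕ) + 1, by have := j.isLt; omega⟩))
        (hPsi _ (nwz' j)) (lPsi _ _ (nwz' j) (nwz j))
        (lPhi _ _ (nwx' ⟨(j : ℕ) + 1, by have := j.isLt; omega⟩)
          (nwx ⟨(j : ℕ) + 1, by have := j.isLt; omega⟩))
      have ng : ∀ a b : ℝ, |-a - -b| = |a - b| := fun a b => by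
        rw [show -a - -b = -(a - b) by ring, abs_neg]
      rw [ng, ng] at m2
      rw [sub_sub_sub_comm]
      refine (abs_sub _ _).trans ?_
      refine (add_le_add m2 m1).trans (le_of_eq ?_)
      simp only [hdx, hdz]
      ring)
  have t3 := sumle
    (fun j => hsg n C (w (Sum.inl ⟨(j : ℕ), by have := j.isLt; omega⟩))
          (w (Sum.inr (Sum.inl j))) (fun k => w (Sum.inr (Sum.inr (j, k)))))
    (fun j => hsg n C (w' (Sum.inl ⟨(j : ℕ), by have := j.isLt; omega⟩))
          (w' (Sum.inr (Sum.inl j))) (fun k => w' (Sum.inr (Sum.inr (j, k)))))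
    (fun j => 24 * (5 * S + R) * (dx ⟨(j : ℕ), by have := j.isLt; omega⟩ + dz j + dy j)) (by
      intro j
      exact hsg_lip n (by omega) C _ _ _ _ R S _ _ hR0 hS hC (wx' _) (wz' _) (wy j) (wy' j))
  have sq : ∀ c a a' : ℝ, |c| ≤ 6 → |a| ≤ R → |a'| ≤ R →
      |c * a' ^ 2 - c * a ^ 2| ≤ 12 * R * |a' - a| := by
    intro c a a' hc ha ha'
    rw [show c * a' ^ 2 - c * a ^ 2 = c * (a' + a) * (a' - a) by ring, abs_mul, abs_mul]
    have : |a' + a| ≤ 2 * R := (abs_add_le _ _).trans (by linarith)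
    refine mul_le_mul_of_nonneg_right ?_ (abs_nonneg _)
    calc |c| * |a' + a| ≤ 6 * (2 * R) := by gcongr
      _ = 12 * R := by ring
  have t4 := sumle
    (fun j => c1 * (w (Sum.inl ⟨(j : ℕ), by have := j.isLt; omega⟩)) ^ 2
          + c2 * (w (Sum.inr (Sum.inl j))) ^ 2)
    (fun j => c1 * (w' (Sum.inl ⟨(j : ℕ), by have := j.isLt; omega⟩)) ^ 2
          + c2 * (w' (Sum.inr (Sum.inl j))) ^ 2)
    (fun j => 12 * R * (dx ⟨(j : ℕ), by have := j.isLt; omega⟩ + dz j)) (by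
      intro j
      rw [add_sub_add_comm, mul_add]
      exact (abs_add_le _ _).trans (add_le_add (sq _ _ _ hc1 (wx _) (wx' _))
        (sq _ _ _ hc2 (wz _) (wz' _))))
  simp only [← Finset.mul_sum, Finset.sum_add_distrib] at t2
  rw [← Finset.mul_sum, Finset.sum_add_distrib, Finset.sum_add_distrib] at t3
  rw [← Finset.mul_sum, Finset.sum_add_distrib (f := fun j : Fin (T - 1) =>
    dx ⟨(j : ℕ), by have := j.isLt; omega⟩)] at t4
  have t2' := t2.trans (mul_le_mul_of_nonneg_left
    (show _ ≤ X + (Z + Y) by linarith) (by positivity))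
  have t3' := t3.trans (mul_le_mul_of_nonneg_left
    (show _ ≤ X + (Z + Y) by linarith) (by positivity))
  have t4' := t4.trans (mul_le_mul_of_nonneg_left
    (show _ ≤ X + (Z + Y) by linarith) (by positivity))
  unfold fbarSgE
  rw [add_sub_add_comm, add_sub_add_comm, add_sub_add_comm]
  refine (abs_add_le _ _).trans ?_
  rw [add_mul]
  refine add_le_add ((abs_add_le _ _).trans ?_) t4'
  rw [add_mul]
  refine add_le_add ((abs_add_le _ _).trans ?_) t3'
  rw [add_mul]
  refine add_le_add t1 ?_
  simpa only [Finset.sum_add_distrib, Finset.sum_sub_distrib] using t2'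

lemma grad_coord {ι : Type*} [Fintype ι] [DecidableEq ι] (f : EuclideanSpace ℝ ι → ℝ)
    (w : EuclideanSpace ℝ ι) (i : ι) (G : ℝ) (hG : 0 ≤ G)
    (h : ∀ t : ℝ, |t| ≤ 1 → |f (w + t • EuclideanSpace.single i 1) - f w| ≤ G * |t|) :
    |gradient f w i| ≤ G := by
  by_cases hd : DifferentiableAt ℝ f w
  · have h1 : gradient f w i = fderiv ℝ f w (EuclideanSpace.single i 1) := by
      rw [← toDual_gradient, InnerProductSpace.toDual_apply_apply]
      rw [EuclideanSpace.inner_single_right]; simp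
    have h2 : HasDerivAt (fun t : ℝ => f (w + t • EuclideanSpace.single i 1))
        (fderiv ℝ f w (EuclideanSpace.single i 1)) 0 :=
      hd.hasFDerivAt.hasLineDerivAt (EuclideanSpace.single i 1)
    rw [h1, ← Real.norm_eq_abs]
    refine h2.le_of_lip' hG ?_
    filter_upwards [Metric.closedBall_mem_nhds (0 : ℝ) one_pos] with t ht
    have ht' : |t| ≤ 1 := by simpa using ht
    simpa using h t ht'
  · rw [gradient_eq_zero_of_not_differentiableAt hd]
    simpa using hG

/-- with `R₁ ≥ 2`, `R₂ ≥ 30 R₁` fixed, there is a constant `G > 0`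
independent of `n` and `T` bounding `‖∇f̄^{sg}‖_∞` on the hypercube where
`‖x‖_∞, ‖z‖_∞ ≤ R₁` and `‖ȳ^{(i)}‖_∞ ≤ n R₂`. -/
theorem stmt_13 (R1 R2 : ℝ) (hR1 : 2 ≤ R1) (hR2 : 30 * R1 ≤ R2) :
    ∃ G : ℝ, 0 < G ∧
      ∀ (n T : ℕ) (hn : 10 ≤ n) (hT : 2 ≤ T) (a1 a2 C c1 c2 : ℝ),
        a1 = Bmat n (((n : ℝ) ^ 2)⁻¹) ⟨0, by omega⟩ ⟨0, by omega⟩ / n →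
        a2 = Bmat n (((n : ℝ) ^ 2)⁻¹) ⟨n - 1, by omega⟩ ⟨0, by omega⟩ / n →
        C = 12 / a2 → c1 = C * (a2 - a1) / 2 → c2 = C * (a2 - a1) / 8 →
        ∀ w : EuclideanSpace ℝ (Fin T ⊕ (Fin (T - 1) ⊕ Fin (T - 1) × Fin n)),
          (∀ i : Fin T, |w (Sum.inl i)| ≤ R1) →
          (∀ j : Fin (T - 1), |w (Sum.inr (Sum.inl j))| ≤ R1) →
          (∀ (j : Fin (T - 1)) (k : Fin n), |w (Sum.inr (Sum.inr (j, k)))| ≤ (n : ℝ) * R2) →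
          ∀ idx, |gradient (fbarSgE n T (by omega) hT C c1 c2) w idx| ≤ G := by
  obtain ⟨G, hG, hlip⟩ := f_lip (R1 + 1) (R2 + 1) (by linarith) (by linarith)
  refine ⟨G, hG, ?_⟩
  intro n T hn hT a1 a2 C c1 c2 h1 h2 hC hc1 hc2 w wx wz wy idx
  obtain ⟨bC, b1, b2⟩ := B_bounds n (le_trans (by norm_num) hn) a1 a2 C c1 c2 h1 h2 hC hc1 hc2
  refine grad_coord _ w idx G hG.le fun t ht => ?_
  have hn1 : (1 : ℝ) ≤ n := by exact_mod_cast (by omega : 1 ≤ n)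
  have hdiff : ∀ i, |(w + t • EuclideanSpace.single idx (1 : ℝ)) i - w i|
      = if i = idx then |t| else 0 := by
    intro i
    by_cases hi : i = idx <;> simp [hi]
  have hle : ∀ i, |(w + t • EuclideanSpace.single idx (1 : ℝ)) i| ≤ |w i| + 1 := by
    intro i
    have h3 := hdiff i
    have h4 : |(w + t • EuclideanSpace.single idx (1 : ℝ)) i - w i| ≤ 1 := by
      rw [h3]; split_ifs <;> linarith
    linarith [abs_sub_abs_le_abs_sub ((w + t • EuclideanSpace.single idx (1 : ℝ)) i) (w i)]
  have := hlip n T (le_trans (by norm_num) hn) hT C c1 c2 bC b1 b2 w (w + t • EuclideanSpace.single idx (1 : ℝ))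
    (fun i => by linarith [wx i]) (fun j => by linarith [wz j])
    (fun j k => by linarith [wy j k])
    (fun i => by linarith [wx i, hle (Sum.inl i)])
    (fun j => by linarith [wz j, hle (Sum.inr (Sum.inl j))])
    (fun j k => by linarith [wy j k, hle (Sum.inr (Sum.inr (j, k)))])
  refine this.trans (le_of_eq ?_)
  simp only [hdiff]
  simp
end
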